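/- Set eps_i := 1 if i <= 2 and eps_i := 2 if i >= 3. Assume 1 <= i <= n and (i <= 3 or n <= 4). Then for every nonnegative integer m and every integer k >= 1, S(D, k*eps_i*m*omega_i) equals the k-fold Minkowski sum of S(D, eps_i*m*omega_i) with itself; that is, the polytope P(D, eps_i*m*omega_i) is a normal lattice polytope. -/

import Mathlib

open scoped Pointwise

/-- A single step in a Dyck path: `α_{p,q} → α_{p,q+1}` or `α_{p,q} → α_{p+1,q}`. -/
def RootStep (a b : ℕ × ℕ) : Prop :=
  (b.1 = a.1 ∧ b.2 = a.2 + 1) ∨ (b.1 = a.1 + 1 ∧ b.2 = a.2)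

/-- `inR n i (p,q)` means that `α_{p,q}` is a positive root of `B_n`
(`1 ≤ p ≤ n`, `p ≤ q ≤ 2n-p`) belonging to `R_i^+`, i.e. `p ≤ i ≤ q`. -/
def inR (n i : ℕ) (a : ℕ × ℕ) : Prop :=
  1 ≤ a.1 ∧ a.1 ≤ i ∧ i ≤ a.2 ∧ a.1 + a.2 ≤ 2 * n

/-- A type 1 Dyck path for `R_i^+` of `B_n`, recorded as the list of its roots. -/
def IsType1 (n i : ℕ) (L : List (ℕ × ℕ)) : Prop :=
  L ≠ [] ∧ L.Chain' RootStep ∧ (∀ x ∈ L, inR n i x) ∧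
    ((L.head? = some (1, i) ∧ L.getLast? = some (i, 2 * n - i - 1)) ∨
     (L.head? = some (1, i + 1) ∧ L.getLast? = some (i, 2 * n - i)))

/-- A type 2 (double) Dyck path for `R_i^+` of `B_n`, recorded as the pair of lists of
roots of its two constituent single paths. -/
def IsType2 (n i : ℕ) (L1 L2 : List (ℕ × ℕ)) : Prop :=
  ∃ j : ℕ, 1 ≤ j ∧ j < i ∧
    L1 ≠ [] ∧ L2 ≠ [] ∧ L1.Chain' RootStep ∧ L2.Chain' RootStep ∧
    (∀ x ∈ L1, inR n i x) ∧ (∀ x ∈ L2, inR n i x) ∧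
    L1.head? = some (1, i) ∧ L2.head? = some (2, i) ∧
    L1.getLast? = some (j, 2 * n - j) ∧ L2.getLast? = some (j + 1, 2 * n - j - 1) ∧
    (∀ x, ¬(x ∈ L1 ∧ x ∈ L2))

/-- The constant `c_i`: `1` if `i = 1` or `i = n`, and `2` if `2 ≤ i ≤ n-1`. -/
def cB (n i : ℕ) : ℕ := if i = 1 ∨ i = n then 1 else 2

/-- `SD n i m` is the set `S(D, m·ω_i)` of lattice points of the Dyck-path polytope:
multi-exponents `s` supported on `R_i^+` with `∑_{β ∈ p} s_β ≤ m` for every type 1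
Dyck path `p` and `∑_{β ∈ p} s_β ≤ m·c_i` for every type 2 Dyck path `p`.
(Elements of a Dyck path are pairwise distinct, so summation over the recording
lists agrees with summation over the underlying set of roots.) -/
def SD (n i m : ℕ) : Set ((ℕ × ℕ) → ℕ) :=
  {s | (∀ β, ¬ inR n i β → s β = 0) ∧
       (∀ L, IsType1 n i L → (L.map s).sum ≤ m) ∧
       (∀ L1 L2, IsType2 n i L1 L2 → ((L1 ++ L2).map s).sum ≤ m * cB n i)}

/-- `ε_i`: `1` if `i ≤ 2`, and `2` if `i ≥ 3`. -/
def epsB (i : ℕ) : ℕ := if i ≤ 2 then 1 else 2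

theorem exists_first_step {f : ℕ → ℤ} (hf : Monotone f) {p q : ℕ} (h : f p < f q) :
    ∃ c, p ≤ c ∧ c < q ∧ f c = f p ∧ f c < f (c + 1) := by
  classical
  have hex : ∃ c, f p < f (c + 1) := ⟨q, h.trans_le (hf (Nat.le_succ q))⟩
  have hs := Nat.find_spec hex
  set c := Nat.find hex with hc
  have hpc : p ≤ c := by
    by_contra hlt
    exact absurd (hf (show c + 1 ≤ p by omega)) (not_le.2 hs)
  have hcq : c < q := by
    by_contra hlt
    rcases Nat.eq_zero_or_pos q with h0 | h0
    · subst h0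
      exact absurd (hf (Nat.zero_le p)) (not_le.2 h)
    · refine Nat.find_min hex (m := q - 1) (by omega) ?_
      rwa [Nat.sub_add_cancel h0]
  have heq : f c = f p := by
    rcases Nat.eq_or_lt_of_le hpc with h1 | h1
    · rw [← h1]
    · refine le_antisymm (not_lt.1 fun hlt => Nat.find_min hex (m := c - 1) (by omega) ?_) (hf hpc)
      rwa [Nat.sub_add_cancel (by omega)]
  exact ⟨c, hpc, hcq, heq, heq ▸ hs⟩

theorem exists_last_step {f : ℕ → ℤ} (hf : Monotone f) {p q : ℕ} (h : f p < f q) :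
    ∃ c, p ≤ c ∧ c < q ∧ f c < f (c + 1) ∧ f (c + 1) = f q := by
  classical
  have hex : ∃ c, f q ≤ f c := ⟨q, le_rfl⟩
  have hs := Nat.find_spec hex
  have hmin := fun k => Nat.find_min (H := hex) (m := k)
  have hq : Nat.find hex ≤ q := Nat.find_min' hex le_rfl
  have hp : p < Nat.find hex := by
    by_contra hlt
    exact absurd (hf (not_lt.1 hlt)) (not_le.2 (h.trans_le hs))
  obtain ⟨c, hc⟩ : ∃ c, Nat.find hex = c + 1 := ⟨Nat.find hex - 1, by omega⟩
  rw [hc] at hs hmin hq hp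
  have h1 := not_le.1 (hmin c (Nat.lt_succ_self c))
  have h2 := hf hq
  exact ⟨c, by omega, by omega, by omega, by omega⟩

theorem exists_greatest {p : ℕ → Prop} (N : ℕ) (hN : ∀ a, p a → a ≤ N) (h : ∃ a, p a) :
    ∃ a, p a ∧ ∀ a', p a' → a' ≤ a := by
  classical
  obtain ⟨a, ha⟩ := h
  exact ⟨Nat.findGreatest p N, Nat.findGreatest_spec (hN a ha) ha,
    fun a' ha' => Nat.le_findGreatest (hN a' ha') ha'⟩

theorem exists_least {p : ℕ → Prop} (h : ∃ a, p a) :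
    ∃ a, p a ∧ ∀ a', p a' → a ≤ a' := by
  classical
  exact ⟨Nat.find h, Nat.find_spec h, fun a' ha' => Nat.find_min' h ha'⟩

/-- The Dyck path inequalities in terms of the prefix sums `X`, `Y`, `Z` of three rows. -/
structure Grid (M : ℕ) (X Y Z : ℕ → ℤ) (v w m : ℤ) : Prop where
  monoX : Monotone X
  monoY : Monotone Y
  monoZ : Monotone Z
  zeroX : X 0 = 0
  zeroY : Y 0 = 0
  zeroZ : Z 0 = 0
  v_nonneg : 0 ≤ v
  w_nonneg : 0 ≤ w
  pathA : ∀ a b, a ≤ b → b + 1 ≤ M → X (a + 1) - Y a + Y (b + 1) - Z b + Z M ≤ m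
  pathB : ∀ a b, 1 ≤ a → a ≤ b → b ≤ M →
    X (a + 1) - X 1 - Y a + Y (b + 1) - Z b + Z (M + 1) ≤ m
  pathC : ∀ a b, b < a → a ≤ M →
    X (a + 1) - Y a + Y (b + 1) - Z b + Y (M + 1) + Z (M + 1) + w ≤ 2 * m
  pathE : ∀ b, b ≤ M → Y (b + 1) - Z b + Z (M + 1) + X (M + 1) + v + w ≤ 2 * m

def TightA (M : ℕ) (X Y Z : ℕ → ℤ) (m : ℤ) (a b : ℕ) : Prop :=
  a ≤ b ∧ b + 1 ≤ M ∧ X (a + 1) - Y a + Y (b + 1) - Z b + Z M = m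

def TightB (M : ℕ) (X Y Z : ℕ → ℤ) (m : ℤ) (a b : ℕ) : Prop :=
  1 ≤ a ∧ a ≤ b ∧ b ≤ M ∧ X (a + 1) - X 1 - Y a + Y (b + 1) - Z b + Z (M + 1) = m

def TightC (M : ℕ) (X Y Z : ℕ → ℤ) (w m : ℤ) (a b : ℕ) : Prop :=
  b < a ∧ a ≤ M ∧ X (a + 1) - Y a + Y (b + 1) - Z b + Y (M + 1) + Z (M + 1) + w = 2 * m

def TightE (M : ℕ) (X Y Z : ℕ → ℤ) (v w m : ℤ) (b : ℕ) : Prop :=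
  b ≤ M ∧ Y (b + 1) - Z b + Z (M + 1) + X (M + 1) + v + w = 2 * m

/-- A root of the first row lying on every tight path. -/
def CommonX (M : ℕ) (X Y Z : ℕ → ℤ) (v w m : ℤ) : Prop :=
  ∃ c, X c < X (c + 1) ∧ (∀ a b, TightA M X Y Z m a b → c ≤ a) ∧
    (∀ a b, TightB M X Y Z m a b → 1 ≤ c ∧ c ≤ a) ∧
    (∀ a b, TightC M X Y Z w m a b → c ≤ a) ∧ (∀ b, TightE M X Y Z v w m b → c ≤ M)

/-- A root of the second row lying on every tight path. -/
def CommonY (M : ℕ) (X Y Z : ℕ → ℤ) (v w m : ℤ) : Prop :=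
  ∃ c, Y c < Y (c + 1) ∧ (∀ a b, TightA M X Y Z m a b → a ≤ c ∧ c ≤ b) ∧
    (∀ a b, TightB M X Y Z m a b → a ≤ c ∧ c ≤ b) ∧
    (∀ a b, TightC M X Y Z w m a b → c ≤ M ∧ (a ≤ c ∨ c ≤ b)) ∧
    (∀ b, TightE M X Y Z v w m b → c ≤ b)

/-- A root of the third row lying on every tight path. -/
def CommonZ (M : ℕ) (X Y Z : ℕ → ℤ) (v w m : ℤ) : Prop :=
  ∃ c, Z c < Z (c + 1) ∧ (∀ a b, TightA M X Y Z m a b → b ≤ c ∧ c < M) ∧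
    (∀ a b, TightB M X Y Z m a b → b ≤ c ∧ c ≤ M) ∧
    (∀ a b, TightC M X Y Z w m a b → b ≤ c ∧ c ≤ M) ∧
    (∀ b, TightE M X Y Z v w m b → b ≤ c ∧ c ≤ M)

theorem Grid.common_of_tightA {M : ℕ} {X Y Z : ℕ → ℤ} {v w m : ℤ} (g : Grid M X Y Z v w m)
    (hm : 1 ≤ m) (hTA : ∃ a b, TightA M X Y Z m a b) (hTB : ∀ a b, ¬ TightB M X Y Z m a b) :
    CommonX M X Y Z v w m ∨ CommonY M X Y Z v w m ∨ CommonZ M X Y Z v w m := by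
  obtain ⟨a₀, b₀, hab₀, hb₀M, h₀⟩ := hTA
  have hX := g.monoX
  have hY := g.monoY
  have hZ := g.monoZ
  have X0 := g.zeroX
  have Y0 := g.zeroY
  have Z0 := g.zeroZ
  have hB : ∀ a b, 1 ≤ a → a ≤ b → b ≤ M →
      X (a + 1) - X 1 - Y a + Y (b + 1) - Z b + Z (M + 1) < m := fun a b h1 h2 h3 =>
    lt_of_le_of_ne (g.pathB a b h1 h2 h3) fun h => hTB a b ⟨h1, h2, h3, h⟩
  by_cases hx : X 0 < X (0 + 1)
  · exact Or.inl ⟨0, hx, fun _ _ _ => by omega, fun a b h => (hTB a b h).elim,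
      fun _ _ _ => by omega, fun _ _ => by omega⟩
  have hX1 : X 1 = 0 := by have := hX (Nat.zero_le 1); simp at hx; omega
  have hTA0 : ∀ a b, TightA M X Y Z m a b → a = 0 := by
    rintro a b ⟨h1, h2, h3⟩
    by_contra ha
    have := hB a b (by omega) h1 (by omega)
    have := hZ (Nat.le_succ M)
    simp only [Nat.succ_eq_add_one] at *
    omega
  by_cases hy : Y 0 < Y (0 + 1)
  · refine Or.inr (Or.inl ⟨0, hy, fun a b h => ⟨(hTA0 a b h).le, by omega⟩,
      fun a b h => (hTB a b h).elim, fun _ _ _ => by omega, fun _ _ => by omega⟩)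
  have hY1 : Y 1 = 0 := by have := hY (Nat.zero_le 1); simp at hy; omega
  have hTA00 : ∀ a b, TightA M X Y Z m a b → b = 0 := by
    intro a b h
    have ha := hTA0 a b h
    subst ha
    obtain ⟨h1, h2, h3⟩ := h
    by_contra hb
    have := hB 1 b (by omega) (by omega) (by omega)
    have := hZ (Nat.le_succ M)
    have := hX (Nat.le_succ 1)
    simp only [Nat.succ_eq_add_one, zero_add] at *
    omega
  have ha0 := hTA0 a₀ b₀ ⟨hab₀, hb₀M, h₀⟩
  have hb0 := hTA00 a₀ b₀ ⟨hab₀, hb₀M, h₀⟩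
  subst ha0 hb0
  simp only [zero_add] at *
  have hM : 2 ≤ M ∨ M = 1 := by omega
  have hz : Z 0 < Z 1 := by
    by_contra hz
    have hz1 := hZ (Nat.zero_le 1)
    rcases hM with hM | hM
    · have := hB 1 1 le_rfl le_rfl (by omega)
      have := hY (show 1 ≤ 2 by omega)
      have := hX (show 1 ≤ 2 by omega)
      have := hZ (show M ≤ M + 1 by omega)
      simp only [Nat.reduceAdd] at *
      omega
    · subst hM; omega
  -- tight double paths start the lower path with the third row
  refine Or.inr (Or.inr ⟨0, by simpa using hz, fun a b h => ⟨(hTA00 a b h).le, by omega⟩,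
    fun a b h => (hTB a b h).elim, ?_, ?_⟩)
  · rintro a b ⟨h1, h2, h3⟩
    refine ⟨?_, by omega⟩
    by_contra hb
    have hC := g.pathC a 0 (by omega) h2
    have hA := g.pathA 0 b (by omega) (by omega)
    simp only [zero_add] at hC hA
    have := hTA00 0 b ⟨by omega, by omega, by simp only [zero_add]; omega⟩
    omega
  · rintro b ⟨h1, h2⟩
    refine ⟨?_, by omega⟩
    by_contra hb
    have hE := g.pathE 0 (by omega)
    simp only [zero_add] at hE
    rcases Nat.lt_or_ge b M with hbM | hbM
    · have hA := g.pathA 0 b (by omega) (by omega)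
      simp only [zero_add] at hA
      have := hTA00 0 b ⟨by omega, by omega, by simp only [zero_add]; omega⟩
      omega
    · obtain rfl : b = M := by omega
      have := hB 1 b le_rfl (by omega) le_rfl
      have := hX (show 1 ≤ 1 + 1 by omega)
      have := hZ (show b ≤ b + 1 by omega)
      omega

theorem Grid.common_of_tightB {M : ℕ} {X Y Z : ℕ → ℤ} {v w m : ℤ} (g : Grid M X Y Z v w m)
    (hM : 1 ≤ M) (hTA : ∀ a b, ¬ TightA M X Y Z m a b)
    (hTB : ∃ a b, TightB M X Y Z m a b) :
    CommonX M X Y Z v w m ∨ CommonY M X Y Z v w m ∨ CommonZ M X Y Z v w m := by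
  obtain ⟨a₀, b₀, hT₀⟩ := hTB
  have hX := g.monoX
  have hY := g.monoY
  have hZ := g.monoZ
  have X0 := g.zeroX
  have Y0 := g.zeroY
  have Z0 := g.zeroZ
  have hX1 := hX (Nat.zero_le 1)
  have hA : ∀ a b, a ≤ b → b + 1 ≤ M →
      X (a + 1) - Y a + Y (b + 1) - Z b + Z M < m := fun a b h1 h2 =>
    lt_of_le_of_ne (g.pathA a b h1 h2) fun h => hTA a b ⟨h1, h2, h⟩
  by_cases hz : Z M < Z (M + 1)
  · exact Or.inr (Or.inr ⟨M, hz, fun a b h => (hTA a b h).elim, fun a b h => ⟨h.2.2.1, le_rfl⟩,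
      fun a b h => ⟨by have := h.1; have := h.2.1; omega, le_rfl⟩, fun b h => ⟨h.1, le_rfl⟩⟩)
  have hZM : Z (M + 1) = Z M := by have := hZ (Nat.le_succ M); simp at this hz; omega
  have hbM : ∀ a b, TightB M X Y Z m a b → b = M := by
    rintro a b ⟨h1, h2, h3, h4⟩
    by_contra hb
    have := hA a b h2 (by omega)
    omega
  by_cases hy : Y M < Y (M + 1)
  · by_cases hE : ∃ b, b < M ∧ TightE M X Y Z v w m b
    · obtain ⟨e, heM, -, he⟩ := hE
      have hXpos : ∀ a b, TightB M X Y Z m a b → X 1 < X (a + 1) := by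
        rintro a b hT
        have hb := hbM a b hT
        obtain ⟨h1, h2, h3, h4⟩ := hT
        subst hb
        have hE' := g.pathE b le_rfl
        by_contra hlt
        have := hA 0 e (by omega) (by omega)
        have := hY (Nat.zero_le a)
        simp only [zero_add] at *
        omega
      have hXa := hXpos a₀ b₀ hT₀
      obtain ⟨c, hc1, hc2, hc3, hc4⟩ := exists_first_step hX hXa
      refine Or.inl ⟨c, hc4, fun a b h => (hTA a b h).elim, ?_, ?_, ?_⟩
      · intro a b h
        refine ⟨hc1, ?_⟩
        have := hXpos a b h
        by_contra hlt
        have := hX (show a + 1 ≤ c by omega)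
        omega
      · rintro a b ⟨h1, h2, h3⟩
        by_contra hlt
        have := hX (show a + 1 ≤ c by omega)
        have := hX (show 1 ≤ a + 1 by omega)
        obtain ⟨k1, k2, k3, k4⟩ := hT₀
        obtain rfl := hbM _ _ ⟨k1, k2, k3, k4⟩
        rcases Nat.lt_or_ge a₀ a with ha | ha
        · have := hX (show a₀ + 1 ≤ a + 1 by omega)
          omega
        · have := g.pathC a₀ b (by omega) k2
          have := g.pathB a b₀ (by omega) h2 le_rfl
          have := hXpos a b₀ ⟨by omega, h2, le_rfl, by omega⟩
          omega
      · intro b h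
        have := hT₀.2.1
        have := hT₀.2.2.1
        omega
    · push Not at hE
      refine Or.inr (Or.inl ⟨M, hy, fun a b h => (hTA a b h).elim, fun a b h => ?_, fun a b h => ?_,
        fun b h => ?_⟩)
      · have := hbM a b h
        have := h.2.1
        omega
      · have := h.2.1
        omega
      · by_contra hlt
        exact hE b (by omega) h
  · have hYM : Y (M + 1) = Y M := by have := hY (Nat.le_succ M); simp at this hy; omega
    have haM : ∀ a b, TightB M X Y Z m a b → a = M := by
      rintro a b hT
      have hb := hbM a b hT
      obtain ⟨h1, h2, h3, h4⟩ := hT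
      subst hb
      by_contra ha
      obtain ⟨N, rfl⟩ : ∃ N, b = N + 1 := ⟨b - 1, by omega⟩
      have := hA a N (by omega) le_rfl
      have := hZ (show N ≤ N + 1 by omega)
      omega
    obtain rfl := haM _ _ hT₀
    obtain rfl := hbM _ _ hT₀
    obtain ⟨N, rfl⟩ : ∃ N, b₀ = N + 1 := ⟨b₀ - 1, by omega⟩
    have := hA N N le_rfl le_rfl
    have := hZ (show N ≤ N + 1 by omega)
    obtain ⟨-, -, -, h4⟩ := hT₀
    have := hY (show N ≤ N + 1 by omega)
    refine Or.inl ⟨N + 1, by omega, fun a b h => (hTA a b h).elim, fun a b h => ?_, ?_, fun b h => ?_⟩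
    · have := haM a b h
      omega
    · rintro a b ⟨h1, h2, h3⟩
      by_contra hlt
      have := g.pathC (N + 1) b (by omega) le_rfl
      have := g.pathB a (N + 1) (by omega) h2 le_rfl
      have := haM a (N + 1) ⟨by omega, h2, le_rfl, by omega⟩
      omega
    · omega

theorem Grid.common_of_tight {M : ℕ} {X Y Z : ℕ → ℤ} {v w m : ℤ} (g : Grid M X Y Z v w m)
    (hw : 0 < w) (hTA : ∃ a b, TightA M X Y Z m a b) (hTB : ∃ a b, TightB M X Y Z m a b) :
    CommonX M X Y Z v w m ∨ CommonY M X Y Z v w m ∨ CommonZ M X Y Z v w m := by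
  have hX := g.monoX
  have hY := g.monoY
  have hZ := g.monoZ
  have X0 := g.zeroX
  have Y0 := g.zeroY
  have Z0 := g.zeroZ
  obtain ⟨p, ⟨p', hp⟩, hpmin⟩ := exists_least hTA
  obtain ⟨q, ⟨q', hq⟩, hqmin⟩ := exists_least (exists_comm.1 hTA)
  obtain ⟨P, ⟨P', hP⟩, hPmax⟩ := exists_greatest (p := fun a => ∃ b, TightB M X Y Z m a b) M
    (fun a ⟨b, h⟩ => h.2.1.trans h.2.2.1) hTB
  obtain ⟨Q, ⟨Q', hQ⟩, hQmax⟩ := exists_greatest (p := fun b => ∃ a, TightB M X Y Z m a b) M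
    (fun b ⟨a, h⟩ => h.2.2.1) (exists_comm.1 hTB)
  replace hpmin : ∀ a b, TightA M X Y Z m a b → p ≤ a := fun a b h => hpmin a ⟨b, h⟩
  replace hqmin : ∀ a b, TightA M X Y Z m a b → q ≤ b := fun a b h => hqmin b ⟨a, h⟩
  replace hPmax : ∀ a b, TightB M X Y Z m a b → a ≤ P := fun a b h => hPmax a ⟨b, h⟩
  replace hQmax : ∀ a b, TightB M X Y Z m a b → b ≤ Q := fun a b h => hQmax b ⟨a, h⟩
  have hpq : TightA M X Y Z m p q := by
    have h1 := hpmin _ _ hq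
    have h2 := hqmin _ _ hp
    obtain ⟨a1, a2, a3⟩ := hp
    obtain ⟨b1, b2, b3⟩ := hq
    have := g.pathA p q (by omega) b2
    have := g.pathA q' p' (by omega) a2
    exact ⟨by omega, b2, by omega⟩
  have hPQ : TightB M X Y Z m P Q := by
    have h1 := hPmax _ _ hQ
    have h2 := hQmax _ _ hP
    obtain ⟨a1, a2, a3, a4⟩ := hP
    obtain ⟨b1, b2, b3, b4⟩ := hQ
    have := g.pathB P Q a1 (by omega) b3
    have := g.pathB Q' P' b1 (by omega) a3
    exact ⟨a1, by omega, b3, by omega⟩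
  clear hp hq hP hQ
  -- a tight path of the first kind and one of the second kind can be uncrossed
  have meet : ∀ a b a' b', TightA M X Y Z m a b → TightB M X Y Z m a' b' →
      TightA M X Y Z m (min a a') (min b b') ∧ TightB M X Y Z m (max a a') (max b b') := by
    rintro a b a' b' ⟨a1, a2, a3⟩ ⟨b1, b2, b3, b4⟩
    have h1 := g.pathA (min a a') (min b b') (by omega) (by omega)
    have h2 := g.pathB (max a a') (max b b') (by omega) (by omega) (by omega)
    have h3 : TightA M X Y Z m (min a a') (min b b') := by
      refine ⟨by omega, by omega, ?_⟩
      rcases le_total a a' with h | h <;> rcases le_total b b' with h' | h' <;>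
        simp only [min_eq_left, min_eq_right, max_eq_left, max_eq_right, h, h'] at * <;> omega
    refine ⟨h3, by omega, by omega, by omega, ?_⟩
    obtain ⟨-, -, h3⟩ := h3
    rcases le_total a a' with h | h <;> rcases le_total b b' with h' | h' <;>
      simp only [min_eq_left, min_eq_right, max_eq_left, max_eq_right, h, h'] at * <;> omega
  have hAle : ∀ a b, TightA M X Y Z m a b → p ≤ a ∧ a ≤ P ∧ q ≤ b ∧ b ≤ Q := by
    intro a b h
    have h1 := (meet _ _ _ _ h hPQ).2
    have := hPmax _ _ h1
    have := hQmax _ _ h1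
    have := hpmin _ _ h
    have := hqmin _ _ h
    omega
  have hBle : ∀ a b, TightB M X Y Z m a b → p ≤ a ∧ a ≤ P ∧ q ≤ b ∧ b ≤ Q := by
    intro a b h
    have h1 := (meet _ _ _ _ hpq h).1
    have := hPmax _ _ h
    have := hQmax _ _ h
    have := hpmin _ _ h1
    have := hqmin _ _ h1
    omega
  obtain ⟨p1, p2, p3⟩ := hpq
  obtain ⟨P1, P2, P3, P4⟩ := hPQ
  by_cases hx : X 1 < X (p + 1)
  · obtain ⟨c, hc1, hc2, hc3, hc4⟩ := exists_first_step hX hx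
    refine Or.inl ⟨c, hc4, fun a b h => ?_, fun a b h => ?_, ?_, fun b h => by omega⟩
    · have := hAle a b h
      omega
    · have := hBle a b h
      omega
    · rintro a b ⟨h1, h2, h3⟩
      by_contra hlt
      have := g.pathC p b (by omega) (by omega)
      have := g.pathA a q (by omega) p2
      have := hpmin a q ⟨by omega, p2, by omega⟩
      omega
  by_cases hz : Z Q < Z M
  · obtain ⟨c, hc1, hc2, hc3, hc4⟩ := exists_last_step hZ hz
    refine Or.inr (Or.inr ⟨c, hc3, fun a b h => ?_, fun a b h => ?_, ?_, ?_⟩)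
    · have := hAle a b h
      omega
    · have := hBle a b h
      omega
    · rintro a b ⟨h1, h2, h3⟩
      refine ⟨?_, by omega⟩
      by_contra hlt
      have := g.pathC a Q (by omega) (by omega)
      have := g.pathB P b (by omega) (by omega) (by omega)
      have := hQmax P b ⟨by omega, by omega, by omega, by omega⟩
      omega
    · rintro b ⟨h1, h2⟩
      refine ⟨?_, by omega⟩
      by_contra hlt
      have := g.pathE Q (by omega)
      have := g.pathB P b (by omega) (by omega) (by omega)
      have := hQmax P b ⟨by omega, by omega, by omega, by omega⟩
      omega
  have hX1 : X (p + 1) = X 1 := le_antisymm (not_lt.1 hx) (hX (by omega))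
  have hZQ : Z M ≤ Z Q := not_lt.1 hz
  have hPq : P ≤ q := by
    by_contra hlt
    have := g.pathC P q (by omega) (by omega)
    have := hY (show Q + 1 ≤ M + 1 by omega)
    have := hY (Nat.zero_le p)
    omega
  have hYp := hY (Nat.zero_le p)
  have hYQ := hY (show Q + 1 ≤ M + 1 by omega)
  have hEq : ∀ b, TightE M X Y Z v w m b → q ≤ b := by
    rintro b ⟨h1, h2⟩
    have := g.pathE q (by omega)
    by_contra hlt
    rcases Nat.lt_or_ge b p with hb | hb
    · have := g.pathA b b le_rfl (by omega)
      have := hX (show 1 ≤ b + 1 by omega)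
      have := hY hb.le
      have := hpmin b b ⟨le_rfl, by omega, by omega⟩
      omega
    · have := g.pathA p b hb (by omega)
      have := hqmin p b ⟨hb, by omega, by omega⟩
      omega
  -- it suffices to find a step of `Y` in `[P, q]` that no tight double path skips
  suffices h : ∃ c, P ≤ c ∧ c ≤ q ∧ Y c < Y (c + 1) ∧
      ∀ a b, TightC M X Y Z w m a b → a ≤ c ∨ c ≤ b by
    obtain ⟨c, hc1, hc2, hc3, hc4⟩ := h
    refine Or.inr (Or.inl ⟨c, hc3, fun a b h => ?_, fun a b h => ?_, fun a b h => ?_, fun b h => ?_⟩)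
    · have := hAle a b h
      omega
    · have := hBle a b h
      omega
    · exact ⟨by omega, hc4 a b h⟩
    · have := hEq b h
      omega
  have hYpos : Y P < Y (q + 1) := by
    by_contra hlt
    have := hY (show P ≤ q + 1 by omega)
    have := g.pathC (q + 1) q (by omega) (by omega)
    have := hX (show P + 1 ≤ q + 1 + 1 by omega)
    omega
  obtain ⟨c, hc1, hc2, hc3, hc4⟩ := exists_first_step hY hYpos
  by_cases hcov : ∃ a, ∃ b, TightC M X Y Z w m a b ∧ b < c ∧ c < a
  swap
  · refine ⟨c, hc1, by omega, hc4, fun a b h => ?_⟩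
    by_contra hlt
    exact hcov ⟨a, b, h, by omega, by omega⟩
  obtain ⟨a, ⟨b, ⟨h1, h2, h3⟩, hbc, hca⟩, hmax⟩ :=
    exists_greatest M (fun a ⟨b, h, _⟩ => h.2.1) hcov
  have hYa : Y a < Y (q + 1) := by
    by_contra hlt
    have hx : Y a - Y P ≤ X (a + 1) - X (P + 1) := by
      rcases Nat.lt_or_ge b P with hb | hb
      · have := g.pathC P b hb (by omega)
        omega
      · have := g.pathC (b + 1) b (by omega) (by omega)
        have := hX (show P + 1 ≤ b + 1 + 1 by omega)
        have := hY (show b + 1 ≤ c by omega)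
        omega
    have hz : Y (q + 1) - Y (b + 1) ≤ Z q - Z b := by
      rcases Nat.lt_or_ge q a with ha | ha
      · have := g.pathC a q ha h2
        omega
      · obtain ⟨a, rfl⟩ : ∃ d, a = d + 1 := ⟨a - 1, by omega⟩
        have := g.pathC (a + 1) a (by omega) h2
        have := hZ (show a ≤ q by omega)
        omega
    omega
  have haq : a ≤ q := by
    by_contra hlt
    have := hY (show q + 1 ≤ a by omega)
    omega
  obtain ⟨d, hd1, hd2, hd3, hd4⟩ := exists_first_step hY hYa
  refine ⟨d, by omega, by omega, hd4, ?_⟩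
  rintro a' b' ⟨k1, k2, k3⟩
  by_contra hlt
  rcases Nat.lt_or_ge b' c with hb | hb
  · have := hmax a' ⟨b', ⟨k1, k2, k3⟩, hb, by omega⟩
    omega
  have hcov' : TightC M X Y Z w m a' b := by
    have := g.pathC a' b (by omega) k2
    rcases Nat.lt_or_ge b' a with hb' | hb'
    · have := g.pathC a b' hb' h2
      exact ⟨by omega, k2, by omega⟩
    · have := g.pathC (b' + 1) b' (by omega) (by omega)
      have := hX (show a + 1 ≤ b' + 1 + 1 by omega)
      have := hY (show b' + 1 ≤ d by omega)
      exact ⟨by omega, k2, by omega⟩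
  have := hmax a' ⟨b, hcov', hbc, by omega⟩
  omega

/-- Prefix sums of a row. -/
def psum (f : ℕ → ℕ) (a : ℕ) : ℤ := ∑ c ∈ Finset.range a, (f c : ℤ)

theorem psum_zero_right (f : ℕ → ℕ) : psum f 0 = 0 := by simp [psum]

theorem psum_succ (f : ℕ → ℕ) (a : ℕ) : psum f (a + 1) = psum f a + f a := by
  simp [psum, Finset.sum_range_succ]

theorem psum_zero_left (a : ℕ) : psum 0 a = 0 := by simp [psum]

theorem psum_add (f g : ℕ → ℕ) (a : ℕ) : psum (f + g) a = psum f a + psum g a := by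
  simp [psum, Finset.sum_add_distrib]

theorem monotone_psum (f : ℕ → ℕ) : Monotone (psum f) :=
  monotone_nat_of_le_succ fun a => by rw [psum_succ]; omega

theorem psum_single (c a : ℕ) : psum (Pi.single c 1) a = if c < a then 1 else 0 := by
  induction a with
  | zero => simp [psum]
  | succ a ih =>
    rw [psum_succ, ih]
    by_cases h : c = a
    · subst h; simp
    · have : a ≠ c := Ne.symm h
      simp only [Pi.single_apply, this, if_false]
      split_ifs <;> omega

theorem exists_single_add {f : ℕ → ℕ} {c : ℕ} (h : 0 < f c) : ∃ u : ℕ → ℕ, f = Pi.single c 1 + u := by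
  refine ⟨f - Pi.single c 1, (add_tsub_cancel_of_le fun a => ?_).symm⟩
  by_cases ha : a = c
  · subst ha; simpa using Nat.succ_le_of_lt h
  · simp [ha]

theorem pos_of_psum_lt {f : ℕ → ℕ} {c : ℕ} (h : psum f c < psum f (c + 1)) : 0 < f c := by
  rw [psum_succ] at h; omega

/-- A lattice point of level `m` splits off a lattice point of level `1` or `2`. -/
def Splits (M : ℕ) (x y z : ℕ → ℕ) (v w : ℕ) (m : ℤ) : Prop :=
  ∃ (j : ℤ) (tx ux ty uy tz uz : ℕ → ℕ) (tv uv tw uw : ℕ), (j = 1 ∨ j = 2) ∧ j ≤ m ∧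
    x = tx + ux ∧ y = ty + uy ∧ z = tz + uz ∧ v = tv + uv ∧ w = tw + uw ∧
    Grid M (psum tx) (psum ty) (psum tz) tv tw j ∧
    Grid M (psum ux) (psum uy) (psum uz) uv uw (m - j)

/-- `Grid` for prefix sums of rows. -/
theorem Grid.of_psum {M : ℕ} {x y z : ℕ → ℕ} {v w : ℕ} {m : ℤ}
    (pathA : ∀ a b, a ≤ b → b + 1 ≤ M →
      psum x (a + 1) - psum y a + psum y (b + 1) - psum z b + psum z M ≤ m)
    (pathB : ∀ a b, 1 ≤ a → a ≤ b → b ≤ M →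
      psum x (a + 1) - psum x 1 - psum y a + psum y (b + 1) - psum z b + psum z (M + 1) ≤ m)
    (pathC : ∀ a b, b < a → a ≤ M → psum x (a + 1) - psum y a + psum y (b + 1) - psum z b
      + psum y (M + 1) + psum z (M + 1) + w ≤ 2 * m)
    (pathE : ∀ b, b ≤ M →
      psum y (b + 1) - psum z b + psum z (M + 1) + psum x (M + 1) + v + w ≤ 2 * m) :
    Grid M (psum x) (psum y) (psum z) v w m :=
  ⟨monotone_psum x, monotone_psum y, monotone_psum z, psum_zero_right x, psum_zero_right y,
    psum_zero_right z, by omega, by omega, pathA, pathB, pathC, pathE⟩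

theorem Grid.splits_of_commonX {M : ℕ} {x y z : ℕ → ℕ} {v w : ℕ} {m : ℤ}
    (g : Grid M (psum x) (psum y) (psum z) v w m) (hm : 1 ≤ m) (hw : 0 < w)
    (h : CommonX M (psum x) (psum y) (psum z) v w m) : Splits M x y z v w m := by
  obtain ⟨c, hc, hA, hB, hC, hE⟩ := h
  obtain ⟨u, rfl⟩ := exists_single_add (pos_of_psum_lt hc)
  obtain ⟨w, rfl⟩ : ∃ w', w = 1 + w' := ⟨w - 1, by omega⟩
  refine ⟨1, Pi.single c 1, u, 0, y, 0, z, 0, v, 1, w, Or.inl rfl, hm, rfl, by simp, by simp,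
    by simp, rfl, Grid.of_psum ?_ ?_ ?_ ?_, Grid.of_psum ?_ ?_ ?_ ?_⟩
  · intro a b h1 h2
    simp only [psum_single, psum_zero_left]
    split_ifs <;> omega
  · intro a b h1 h2 h3
    simp only [psum_single, psum_zero_left]
    split_ifs <;> omega
  · intro a b h1 h2
    simp only [psum_single, psum_zero_left]
    split_ifs <;> omega
  · intro b h1
    simp only [psum_single, psum_zero_left]
    split_ifs <;> omega
  · intro a b h1 h2
    have := g.pathA a b h1 h2
    have := fun h => hA a b ⟨h1, h2, h⟩
    simp only [psum_single, psum_add] at *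
    split_ifs at * <;> omega
  · intro a b h1 h2 h3
    have := g.pathB a b h1 h2 h3
    have := fun h => hB a b ⟨h1, h2, h3, h⟩
    simp only [psum_single, psum_add] at *
    split_ifs at * <;> omega
  · intro a b h1 h2
    have := g.pathC a b h1 h2
    have := fun h => hC a b ⟨h1, h2, h⟩
    simp only [psum_single, psum_add] at *
    push_cast at *
    split_ifs at * <;> omega
  · intro b h1
    have := g.pathE b h1
    have := fun h => hE b ⟨h1, h⟩
    simp only [psum_single, psum_add] at *
    push_cast at *
    split_ifs at * <;> omega

theorem Grid.splits_of_commonY {M : ℕ} {x y z : ℕ → ℕ} {v w : ℕ} {m : ℤ}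
    (g : Grid M (psum x) (psum y) (psum z) v w m) (hm : 1 ≤ m) (hw : 0 < w)
    (h : CommonY M (psum x) (psum y) (psum z) v w m) : Splits M x y z v w m := by
  obtain ⟨c, hc, hA, hB, hC, hE⟩ := h
  obtain ⟨u, rfl⟩ := exists_single_add (pos_of_psum_lt hc)
  obtain ⟨w, rfl⟩ : ∃ w', w = 1 + w' := ⟨w - 1, by omega⟩
  refine ⟨1, 0, x, Pi.single c 1, u, 0, z, 0, v, 1, w, Or.inl rfl, hm, by simp, rfl, by simp,
    by simp, rfl, Grid.of_psum ?_ ?_ ?_ ?_, Grid.of_psum ?_ ?_ ?_ ?_⟩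
  · intro a b h1 h2
    simp only [psum_single, psum_zero_left]
    split_ifs <;> omega
  · intro a b h1 h2 h3
    simp only [psum_single, psum_zero_left]
    split_ifs <;> omega
  · intro a b h1 h2
    simp only [psum_single, psum_zero_left]
    split_ifs <;> omega
  · intro b h1
    simp only [psum_single, psum_zero_left]
    split_ifs <;> omega
  · intro a b h1 h2
    have := g.pathA a b h1 h2
    have := fun h => hA a b ⟨h1, h2, h⟩
    simp only [psum_single, psum_add] at *
    split_ifs at * <;> omega
  · intro a b h1 h2 h3
    have := g.pathB a b h1 h2 h3
    have := fun h => hB a b ⟨h1, h2, h3, h⟩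
    simp only [psum_single, psum_add] at *
    split_ifs at * <;> omega
  · intro a b h1 h2
    have := g.pathC a b h1 h2
    have := fun h => hC a b ⟨h1, h2, h⟩
    simp only [psum_single, psum_add] at *
    push_cast at *
    split_ifs at * <;> omega
  · intro b h1
    have := g.pathE b h1
    have := fun h => hE b ⟨h1, h⟩
    simp only [psum_single, psum_add] at *
    push_cast at *
    split_ifs at * <;> omega

theorem Grid.splits_of_commonZ {M : ℕ} {x y z : ℕ → ℕ} {v w : ℕ} {m : ℤ}
    (g : Grid M (psum x) (psum y) (psum z) v w m) (hm : 1 ≤ m) (hw : 0 < w)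
    (h : CommonZ M (psum x) (psum y) (psum z) v w m) : Splits M x y z v w m := by
  obtain ⟨c, hc, hA, hB, hC, hE⟩ := h
  obtain ⟨u, rfl⟩ := exists_single_add (pos_of_psum_lt hc)
  obtain ⟨w, rfl⟩ : ∃ w', w = 1 + w' := ⟨w - 1, by omega⟩
  refine ⟨1, 0, x, 0, y, Pi.single c 1, u, 0, v, 1, w, Or.inl rfl, hm, by simp, by simp, rfl,
    by simp, rfl, Grid.of_psum ?_ ?_ ?_ ?_, Grid.of_psum ?_ ?_ ?_ ?_⟩
  · intro a b h1 h2
    simp only [psum_single, psum_zero_left]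
    split_ifs <;> omega
  · intro a b h1 h2 h3
    simp only [psum_single, psum_zero_left]
    split_ifs <;> omega
  · intro a b h1 h2
    simp only [psum_single, psum_zero_left]
    split_ifs <;> omega
  · intro b h1
    simp only [psum_single, psum_zero_left]
    split_ifs <;> omega
  · intro a b h1 h2
    have := g.pathA a b h1 h2
    have := fun h => hA a b ⟨h1, h2, h⟩
    simp only [psum_single, psum_add] at *
    split_ifs at * <;> omega
  · intro a b h1 h2 h3
    have := g.pathB a b h1 h2 h3
    have := fun h => hB a b ⟨h1, h2, h3, h⟩
    simp only [psum_single, psum_add] at *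
    split_ifs at * <;> omega
  · intro a b h1 h2
    have := g.pathC a b h1 h2
    have := fun h => hC a b ⟨h1, h2, h⟩
    simp only [psum_single, psum_add] at *
    push_cast at *
    split_ifs at * <;> omega
  · intro b h1
    have := g.pathE b h1
    have := fun h => hE b ⟨h1, h⟩
    simp only [psum_single, psum_add] at *
    push_cast at *
    split_ifs at * <;> omega

/-- Splitting when some corner value `w` is positive. -/
theorem Grid.splits_of_pos {M : ℕ} {x y z : ℕ → ℕ} {v w : ℕ} {m : ℤ}
    (g : Grid M (psum x) (psum y) (psum z) v w m) (hm : 1 ≤ m) (hM : 1 ≤ M) (hw : 0 < w) :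
    Splits M x y z v w m := by
  have key : (∀ a b, ¬ TightA M (psum x) (psum y) (psum z) m a b) →
      (∀ a b, ¬ TightB M (psum x) (psum y) (psum z) m a b) → Splits M x y z v w m := by
    intro hTA hTB
    have hA : ∀ a b, a ≤ b → b + 1 ≤ M →
        psum x (a + 1) - psum y a + psum y (b + 1) - psum z b + psum z M ≤ m - 1 :=
      fun a b h1 h2 => Int.le_sub_one_of_lt
        (lt_of_le_of_ne (g.pathA a b h1 h2) fun h => hTA a b ⟨h1, h2, h⟩)
    have hB : ∀ a b, 1 ≤ a → a ≤ b → b ≤ M →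
        psum x (a + 1) - psum x 1 - psum y a + psum y (b + 1) - psum z b + psum z (M + 1)
          ≤ m - 1 :=
      fun a b h1 h2 h3 => Int.le_sub_one_of_lt
        (lt_of_le_of_ne (g.pathB a b h1 h2 h3) fun h => hTB a b ⟨h1, h2, h3, h⟩)
    have h0 : ∀ d e : ℕ, d ≤ 2 → d + e ≤ 2 →
        Grid M (psum 0) (psum 0) (psum 0) (e : ℕ) (d : ℕ) 1 := fun d e h1 h2 =>
      Grid.of_psum (fun _ _ _ _ => by simp [psum_zero_left])
        (fun _ _ _ _ _ => by simp [psum_zero_left])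
        (fun _ _ _ _ => by simp only [psum_zero_left]; omega)
        (fun _ _ => by simp only [psum_zero_left]; omega)
    have y0 := g.zeroY
    have z0 := g.zeroZ
    have hC : ∀ a b, b < a → a ≤ M → psum x (a + 1) - psum y a + psum y (b + 1) - psum z b
      + psum y (M + 1) + psum z (M + 1) ≤ 2 * (m - 1) := by
      intro a b h1 h2
      have := hA 0 b (by omega) (by omega)
      have := hB a M (by omega) h2 le_rfl
      simp only [zero_add] at *
      omega
    by_cases hw2 : 2 ≤ w
    · obtain ⟨w, rfl⟩ : ∃ w', w = 2 + w' := ⟨w - 2, by omega⟩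
      refine ⟨1, 0, x, 0, y, 0, z, 0, v, 2, w, Or.inl rfl, hm, by simp, by simp, by simp,
        by simp, rfl, h0 2 0 le_rfl le_rfl, Grid.of_psum hA hB ?_ ?_⟩
      · intro a b h1 h2
        have := g.pathC a b h1 h2
        omega
      · intro b h1
        have := g.pathE b h1
        omega
    · obtain rfl : w = 1 := by omega
      by_cases hv : v = 0
      · subst hv
        refine ⟨1, 0, x, 0, y, 0, z, 0, 0, 1, 0, Or.inl rfl, hm, by simp, by simp, by simp,
          by simp, rfl, h0 1 0 (by omega) (by omega), Grid.of_psum hA hB ?_ ?_⟩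
        · intro a b h1 h2
          have := hC a b h1 h2
          omega
        · intro b h1
          have hx := hB M M hM le_rfl le_rfl
          rcases Nat.lt_or_ge b M with hb | hb
          · have := hA 0 b (by omega) (by omega)
            have := monotone_psum z (Nat.le_succ M)
            have := monotone_psum y (Nat.le_succ M)
            simp only [zero_add, Nat.succ_eq_add_one] at *
            omega
          · obtain rfl : b = M := by omega
            obtain ⟨b, rfl⟩ : ∃ b', b = b' + 1 := ⟨b - 1, by omega⟩
            have := hA 0 b (by omega) le_rfl
            have := monotone_psum z (Nat.le_succ b)
            simp only [zero_add, Nat.succ_eq_add_one] at *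
            omega
      · obtain ⟨v, rfl⟩ : ∃ v', v = 1 + v' := ⟨v - 1, by omega⟩
        refine ⟨1, 0, x, 0, y, 0, z, 1, v, 1, 0, Or.inl rfl, hm, by simp, by simp, by simp,
          by simp, rfl, h0 1 1 (by omega) (by omega), Grid.of_psum hA hB ?_ ?_⟩
        · intro a b h1 h2
          have := hC a b h1 h2
          omega
        · intro b h1
          have := g.pathE b h1
          push_cast at *
          omega
  by_cases hTA : ∃ a b, TightA M (psum x) (psum y) (psum z) m a b <;>
    by_cases hTB : ∃ a b, TightB M (psum x) (psum y) (psum z) m a b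
  · rcases g.common_of_tight (by omega) hTA hTB with h | h | h
    · exact g.splits_of_commonX hm hw h
    · exact g.splits_of_commonY hm hw h
    · exact g.splits_of_commonZ hm hw h
  · push Not at hTB
    rcases g.common_of_tightA hm hTA hTB with h | h | h
    · exact g.splits_of_commonX hm hw h
    · exact g.splits_of_commonY hm hw h
    · exact g.splits_of_commonZ hm hw h
  · push Not at hTA
    rcases g.common_of_tightB hM hTA hTB with h | h | h
    · exact g.splits_of_commonX hm hw h
    · exact g.splits_of_commonY hm hw h
    · exact g.splits_of_commonZ hm hw h
  · push Not at hTA hTB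
    exact key hTA hTB

theorem exists_first_argmax (f : ℕ → ℤ) (p k : ℕ) :
    ∃ a, p ≤ a ∧ a ≤ p + k ∧ (∀ a', p ≤ a' → a' ≤ p + k → f a' ≤ f a) ∧
      ∀ a', p ≤ a' → a' < a → f a' < f a := by
  induction k with
  | zero =>
    refine ⟨p, le_rfl, by omega, fun a' h1 h2 => ?_, fun a' h1 h2 => by omega⟩
    obtain rfl : a' = p := by omega
    rfl
  | succ k ih =>
    obtain ⟨a, h1, h2, h3, h4⟩ := ih
    by_cases h : f a < f (p + (k + 1))
    · refine ⟨p + (k + 1), by omega, le_rfl, fun a' k1 k2 => ?_, fun a' k1 k2 => ?_⟩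
      · rcases Nat.lt_or_ge a' (p + (k + 1)) with h' | h'
        · exact (h3 a' k1 (by omega)).trans h.le
        · obtain rfl : a' = p + (k + 1) := by omega
          rfl
      · exact (h3 a' k1 (by omega)).trans_lt h
    · refine ⟨a, h1, by omega, fun a' k1 k2 => ?_, h4⟩
      rcases Nat.lt_or_ge a' (p + (k + 1)) with h' | h'
      · exact h3 a' k1 (by omega)
      · obtain rfl : a' = p + (k + 1) := by omega
        exact not_lt.1 h

theorem exists_last_argmax (f : ℕ → ℤ) (k : ℕ) :
    ∃ a, a ≤ k ∧ (∀ a', a' ≤ k → f a' ≤ f a) ∧ ∀ a', a < a' → a' ≤ k → f a' < f a := by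
  obtain ⟨a, -, h2, h3, h4⟩ := exists_first_argmax (fun c => f (k - c)) 0 k
  refine ⟨k - a, by omega, fun a' h => ?_, fun a' h h' => ?_⟩
  · simpa [Nat.sub_sub_self h] using h3 (k - a') (by omega) (by omega)
  · simpa [Nat.sub_sub_self h'] using h4 (k - a') (by omega) (by omega)

/-- The single-path inequalities for three rows. -/
structure Single (M : ℕ) (X Y Z : ℕ → ℤ) (m : ℤ) : Prop where
  pathA : ∀ a b, a ≤ b → b + 1 ≤ M → X (a + 1) - Y a + Y (b + 1) - Z b + Z M ≤ m
  pathB : ∀ a b, 1 ≤ a → a ≤ b → b ≤ M →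
    X (a + 1) - X 1 - Y a + Y (b + 1) - Z b + Z (M + 1) ≤ m

theorem Single.double_le {M : ℕ} {x y z : ℕ → ℕ} {m : ℤ} (hM : 1 ≤ M)
    (g : Single M (psum x) (psum y) (psum z) m) {b : ℕ} (hb : b ≤ M) :
    psum y (b + 1) - psum z b + psum z (M + 1) + psum x (M + 1) ≤ 2 * m := by
  have hx := g.pathB M M hM le_rfl le_rfl
  have hY := monotone_psum y (show M ≤ M + 1 by omega)
  rcases Nat.lt_or_ge b M with hb | hb
  · have := g.pathA 0 b (by omega) (by omega)
    simp only [zero_add, psum_zero_right] at *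
    omega
  · obtain rfl : b = M := by omega
    obtain ⟨b, rfl⟩ : ∃ b', b = b' + 1 := ⟨b - 1, by omega⟩
    have := g.pathA 0 b (by omega) le_rfl
    have := monotone_psum z (Nat.le_succ b)
    simp only [zero_add, psum_zero_right, Nat.succ_eq_add_one] at *
    omega

theorem Single.grid {M : ℕ} {x y z : ℕ → ℕ} {v : ℕ} {m : ℤ}
    (g : Single M (psum x) (psum y) (psum z) m)
    (hE : ∀ b, b ≤ M → psum y (b + 1) - psum z b + psum z (M + 1) + psum x (M + 1) + v ≤ 2 * m) :
    Grid M (psum x) (psum y) (psum z) v (0 : ℕ) m := by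
  refine Grid.of_psum g.pathA g.pathB ?_ ?_
  · intro a b h1 h2
    have := g.pathA 0 b (by omega) (by omega)
    have := g.pathB a M (by omega) h2 le_rfl
    simp only [zero_add, psum_zero_right] at *
    omega
  · intro b hb
    have := hE b hb
    omega

theorem splits_of_single {M : ℕ} {tx ux ty uy tz uz : ℕ → ℕ} {v : ℕ} {j m μ : ℤ} (hM : 1 ≤ M)
    (hj : j = 1 ∨ j = 2) (hjm : j ≤ m) (ht : Single M (psum tx) (psum ty) (psum tz) j)
    (hu : Single M (psum ux) (psum uy) (psum uz) (m - j))
    (hμ : ∀ b b', b ≤ M → b' ≤ M → psum ty (b + 1) - psum tz b + psum tz (M + 1)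
      + (psum uy (b' + 1) - psum uz b' + psum uz (M + 1)) ≤ μ)
    (hv : μ + psum (tx + ux) (M + 1) + v ≤ 2 * m) :
    Splits M (tx + ux) (ty + uy) (tz + uz) v 0 m := by
  obtain ⟨b, hb, hbmax, -⟩ :=
    exists_last_argmax (fun b => psum ty (b + 1) - psum tz b + psum tz (M + 1)) M
  obtain ⟨b', hb', hbmax', -⟩ :=
    exists_last_argmax (fun b => psum uy (b + 1) - psum uz b + psum uz (M + 1)) M
  have h1 := ht.double_le hM hb
  have h2 := hu.double_le hM hb'
  have h3 := hμ b b' hb hb'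
  rw [psum_add] at hv
  obtain ⟨r, hr⟩ : ∃ r : ℕ, (r : ℤ) =
      2 * j - (psum ty (b + 1) - psum tz b + psum tz (M + 1) + psum tx (M + 1)) :=
    ⟨_, Int.toNat_of_nonneg (by omega)⟩
  refine ⟨j, tx, ux, ty, uy, tz, uz, min v r, v - min v r, 0, 0, hj, hjm, rfl, rfl, rfl,
    by omega, rfl, ht.grid fun c hc => ?_, hu.grid fun c hc => ?_⟩
  · have := hbmax c hc
    omega
  · have := hbmax' c hc
    omega

set_option maxHeartbeats 1000000 in
/-- Splitting off a level two point when the double paths are too long for level one. -/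
theorem Single.exists_split_two {M : ℕ} {x y z : ℕ → ℕ} {m μ : ℤ}
    (g : Single M (psum x) (psum y) (psum z) m)
    (hμ : ∀ b, b ≤ M → psum y (b + 1) - psum z b + psum z (M + 1) ≤ μ)
    (hbad : ∃ a b, 1 ≤ a ∧ a + 1 ≤ M ∧ b + 1 ≤ M ∧
      m + μ < psum x 1 + psum y (b + 1) - psum z b + psum z M
        + (psum x (a + 1) - psum x 1 - psum y a + psum y (M + 1) - psum z M + psum z (M + 1))) :
    2 ≤ m ∧ ∃ tx ux ty uy tz uz : ℕ → ℕ, x = tx + ux ∧ y = ty + uy ∧ z = tz + uz ∧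
      Single M (psum tx) (psum ty) (psum tz) 2 ∧
      Single M (psum ux) (psum uy) (psum uz) (m - 2) ∧
      ∀ b b', b ≤ M → b' ≤ M → psum ty (b + 1) - psum tz b + psum tz (M + 1)
        + (psum uy (b' + 1) - psum uz b' + psum uz (M + 1)) ≤ μ := by
  obtain ⟨a₀, b₀, ha₀, haM, hbM, h₀⟩ := hbad
  obtain ⟨N, rfl⟩ : ∃ N, M = N + 2 := ⟨M - 2, by omega⟩
  obtain ⟨a, ha1, ha2, ha3, ha4⟩ := exists_first_argmax (fun a => psum x (a + 1) - psum y a) 1 N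
  obtain ⟨b, hb2, hb3, hb4⟩ := exists_last_argmax (fun b => psum y (b + 1) - psum z b) (N + 1)
  have hX := monotone_psum x
  have hY := monotone_psum y
  have hZ := monotone_psum z
  have X0 := psum_zero_right x
  have Y0 := psum_zero_right y
  have Z0 := psum_zero_right z
  have hA := g.pathA
  have hB := g.pathB
  have hbad : m + μ < psum y (b + 1) - psum z b
      + (psum x (a + 1) - psum y a + psum y (N + 2 + 1) + psum z (N + 2 + 1)) := by
    have := ha3 a₀ ha₀ (by omega)
    have := hb3 b₀ (by omega)
    omega
  have hab : b < a := by
    by_contra hlt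
    have := hA a b (by omega) (by omega)
    have := hμ (N + 2) le_rfl
    omega
  have hμb := hμ b (by omega)
  have hμM := hμ (N + 2) le_rfl
  have hBa := hB a (N + 2) ha1 (by omega) le_rfl
  have hAb := hA 0 b (by omega) (by omega)
  have hZM := hZ (show N + 2 ≤ N + 2 + 1 by omega)
  simp only [zero_add] at hAb
  have hx0 : 0 < x 0 := by
    have := psum_succ x 0
    simp only [zero_add] at this
    omega
  have hyM : 0 < y (N + 2) := by
    have := psum_succ y (N + 2)
    have := hA a (N + 1) (by omega) le_rfl
    have := hZ (show N + 1 ≤ N + 2 by omega)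
    rw [show N + 1 + 1 = N + 2 from rfl] at *
    omega
  have hxa : 0 < x a := by
    have := psum_succ x a
    obtain ⟨a, rfl⟩ : ∃ a', a = a' + 1 := ⟨a - 1, by omega⟩
    have := hY (show a ≤ a + 1 by omega)
    rcases Nat.eq_zero_or_pos a with h | h
    · subst h
      obtain rfl : b = 0 := by omega
      simp only [zero_add, Nat.reduceAdd] at *
      omega
    · have := ha4 a h (by omega)
      omega
  have hzb : psum z b < psum z a := by
    have := hb4 (b + 1) (by omega) (by omega)
    have := hY (show b + 1 ≤ b + 1 + 1 by omega)
    have := hZ (show b + 1 ≤ a by omega)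
    omega
  obtain ⟨d, hd1, hd2, hd3, hd4⟩ := exists_last_step hZ hzb
  have hm : 2 ≤ m := by
    have := psum_succ x a
    have := psum_succ y (N + 2)
    have := hX ha1
    have := hY (show a ≤ N + 2 by omega)
    omega
  have tightA : ∀ α β, α ≤ β → β + 1 ≤ N + 2 → α < a → d < β →
      psum x (α + 1) - psum y α + psum y (β + 1) - psum z β + psum z (N + 2) ≤ m - 1 := by
    intro α β h1 h2 h3 h4
    have hφ : psum x (α + 1) - psum y α < psum x (a + 1) - psum y a := by
      rcases Nat.eq_zero_or_pos α with h | h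
      · subst h
        simp only [zero_add] at *
        omega
      · exact ha4 α h h3
    rcases Nat.lt_or_ge β a with h | h
    · have := hA a a le_rfl (by omega)
      have := hY (show β + 1 ≤ a + 1 by omega)
      have := hZ (show d + 1 ≤ β by omega)
      omega
    · have := hA a β h h2
      omega
  have hBlt : ∀ α β, 1 ≤ α → α ≤ β → β + 1 ≤ N + 2 → psum x (α + 1) - psum x 1 - psum y α
      + psum y (β + 1) - psum z β + psum z (N + 2 + 1) ≤ m - 1 := by
    intro α β h1 h2 h3
    have := hA α β h2 h3
    omega
  have nearB : ∀ α β, 1 ≤ α → α ≤ β → β + 1 ≤ N + 2 → α < a → d < β → psum x (α + 1) - psum x 1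
      - psum y α + psum y (β + 1) - psum z β + psum z (N + 2 + 1) ≤ m - 2 := by
    intro α β h0 h1 h2 h3 h4
    have := ha4 α h0 h3
    rcases Nat.lt_or_ge β a with h | h
    · have := hBlt a a ha1 le_rfl (by omega)
      have := hY (show β + 1 ≤ a + 1 by omega)
      have := hZ (show d + 1 ≤ β by omega)
      omega
    · have := hBlt a β ha1 h h2
      omega
  refine ⟨hm, ?_⟩
  obtain ⟨x', hx'⟩ := exists_single_add hx0
  obtain ⟨x'', rfl⟩ : ∃ u, x' = Pi.single a 1 + u := by
    refine exists_single_add ?_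
    rw [hx', Pi.add_apply, Pi.single_eq_of_ne (by omega)] at hxa
    omega
  obtain ⟨y', hy'⟩ := exists_single_add hyM
  obtain ⟨z', hz'⟩ := exists_single_add (pos_of_psum_lt hd3)
  have ex : ∀ k, psum x'' k = psum x k - psum (Pi.single 0 1) k - psum (Pi.single a 1) k := by
    intro k
    rw [hx', psum_add, psum_add]
    ring
  have ey : ∀ k, psum y' k = psum y k - psum (Pi.single (N + 2) 1) k := by
    intro k
    rw [hy', psum_add]
    ring
  have ez : ∀ k, psum z' k = psum z k - psum (Pi.single d 1) k := by
    intro k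
    rw [hz', psum_add]
    ring
  refine ⟨Pi.single 0 1 + Pi.single a 1, x'', Pi.single (N + 2) 1, y', Pi.single d 1, z',
    hx'.trans (add_assoc _ _ _).symm, hy', hz', ⟨?_, ?_⟩, ⟨?_, ?_⟩, ?_⟩
  · intro α β h1 h2
    simp only [psum_single, psum_add]
    split_ifs <;> omega
  · intro α β h1 h2 h3
    simp only [psum_single, psum_add]
    split_ifs <;> omega
  · intro α β h1 h2
    have h3 := tightA α β h1 h2
    have h4 := hA α β h1 h2
    clear * - h1 h2 h3 h4 hab ha2 hd2 ex ey ez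
    simp only [ex, ey, ez, psum_single]
    split_ifs <;> omega
  · intro α β h1 h2 h3
    have h5 := nearB α β h1 h2
    have h6 := hBlt α β h1 h2
    have h7 := hB α β h1 h2 h3
    have h8 := ha4 α h1
    rcases Nat.lt_or_ge β (N + 2) with h | h
    · replace h5 := h5 h
      replace h6 := h6 h
      clear * - h1 h2 h3 h5 h6 hab ha1 ha2 hd2 h ex ey ez
      simp only [ex, ey, ez, psum_single]
      split_ifs <;> omega
    · obtain rfl : β = N + 2 := by omega
      clear * - h1 h2 h3 h7 h8 hBa hab ha1 ha2 hd2 h ex ey ez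
      simp only [ex, ey, ez, psum_single]
      split_ifs <;> omega
  · intro β β' h1 h2
    have h3 := hμ β' h2
    have h4 := hb4 β'
    clear * - h1 h2 h3 h4 hμb hab ha2 hd2 hd1 ex ey ez
    simp only [ey, ez, psum_single]
    split_ifs <;> omega

def potX (M : ℕ) (x : ℕ → ℕ) (c : ℕ) : ℤ := psum x (min (c + 1) M) - psum x 1

def potY (M : ℕ) (x y : ℕ → ℕ) (K : ℤ) : ℕ → ℤ
  | 0 => K + y 0
  | c + 1 => max (potY M x y K c) (potX M x (c + 1)) + y (c + 1)

def potZ (M : ℕ) (x y z : ℕ → ℕ) (K : ℤ) : ℕ → ℤ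
  | 0 => potY M x y K 0 + z 0
  | c + 1 => max (potZ M x y z K c) (potY M x y K (c + 1)) + z (c + 1)

theorem potY_eq (M : ℕ) (x y : ℕ → ℕ) (K : ℤ) (c : ℕ) :
    potY M x y K c = K + psum y (c + 1) ∨
      ∃ a, 1 ≤ a ∧ a ≤ c ∧ potY M x y K c = potX M x a + psum y (c + 1) - psum y a := by
  induction c with
  | zero => left; simp [potY, psum_succ, psum_zero_right]
  | succ c ih =>
    have e := psum_succ y (c + 1)
    rcases le_total (potX M x (c + 1)) (potY M x y K c) with h | h
    · have h' : potY M x y K (c + 1) = potY M x y K c + y (c + 1) := by simp [potY, h]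
      rcases ih with ih | ⟨a, h1, h2, h3⟩
      · left; omega
      · right; exact ⟨a, h1, by omega, by omega⟩
    · have h' : potY M x y K (c + 1) = potX M x (c + 1) + y (c + 1) := by simp [potY, h]
      right; exact ⟨c + 1, by omega, le_rfl, by omega⟩

theorem potZ_eq (M : ℕ) (x y z : ℕ → ℕ) (K : ℤ) (c : ℕ) :
    ∃ b, b ≤ c ∧ potZ M x y z K c = potY M x y K b + psum z (c + 1) - psum z b := by
  induction c with
  | zero => exact ⟨0, le_rfl, by simp [potZ, psum_succ, psum_zero_right]⟩
  | succ c ih =>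
    have e := psum_succ z (c + 1)
    rcases le_total (potY M x y K (c + 1)) (potZ M x y z K c) with h | h
    · have h' : potZ M x y z K (c + 1) = potZ M x y z K c + z (c + 1) := by simp [potZ, h]
      obtain ⟨b, h1, h2⟩ := ih
      exact ⟨b, by omega, by omega⟩
    · have h' : potZ M x y z K (c + 1) = potY M x y K (c + 1) + z (c + 1) := by simp [potZ, h]
      exact ⟨c + 1, le_rfl, by omega⟩

/-- Every value of `potZ` is realised by a path. -/
theorem potZ_le {M : ℕ} {x y z : ℕ → ℕ} {K r : ℤ} {c : ℕ}
    (h0 : ∀ b, b ≤ c → K + psum y (b + 1) + psum z (c + 1) - psum z b ≤ r)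
    (h1 : ∀ a b, 1 ≤ a → a ≤ b → b ≤ c →
      potX M x a + psum y (b + 1) - psum y a + psum z (c + 1) - psum z b ≤ r) :
    potZ M x y z K c ≤ r := by
  obtain ⟨b, hb, e⟩ := potZ_eq M x y z K c
  rcases potY_eq M x y K b with h | ⟨a, ha, hab, h⟩
  · have := h0 b hb
    omega
  · have := h1 a b ha hab hb
    omega

/-- The image of three rows under a monotone reparametrisation of the potentials. -/
structure Image (M : ℕ) (hx hy hz : ℕ → ℤ) (K : ℤ) (S : ℤ → ℤ) (x y z : ℕ → ℕ) : Prop where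
  mono : Monotone S
  x_succ : ∀ c, c + 1 < M → (x (c + 1) : ℤ) = S (hx (c + 1)) - S (hx c)
  y_zero : (y 0 : ℤ) = S (hy 0) - S K
  y_succ : ∀ c, (y (c + 1) : ℤ) = S (hy (c + 1)) - S (max (hy c) (hx (c + 1)))
  z_zero : (z 0 : ℤ) = S (hz 0) - S (hy 0)
  z_succ : ∀ c, (z (c + 1) : ℤ) = S (hz (c + 1)) - S (max (hz c) (hy (c + 1)))

namespace Image

variable {M : ℕ} {hx hy hz : ℕ → ℤ} {K : ℤ} {S : ℤ → ℤ} {x y z : ℕ → ℕ}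

theorem psum_x (h : Image M hx hy hz K S x y z) {a : ℕ} (ha : a < M) :
    psum x (a + 1) - psum x 1 = S (hx a) - S (hx 0) := by
  induction a with
  | zero => simp
  | succ a ih =>
    have := ih (by omega)
    have := h.x_succ a ha
    have := psum_succ x (a + 1)
    omega

theorem psum_y_zero (h : Image M hx hy hz K S x y z) (b : ℕ) :
    psum y (b + 1) ≤ S (hy b) - S K := by
  induction b with
  | zero =>
    have := psum_succ y 0
    have := psum_zero_right y
    have := h.y_zero
    omega
  | succ b ih =>
    have := psum_succ y (b + 1)
    have := h.y_succ b
    have := h.mono (le_max_left (hy b) (hx (b + 1)))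
    omega

theorem psum_y (h : Image M hx hy hz K S x y z) {a b : ℕ} (ha : 1 ≤ a) (hab : a ≤ b) :
    psum y (b + 1) - psum y a ≤ S (hy b) - S (hx a) := by
  induction b, hab using Nat.le_induction with
  | base =>
    obtain ⟨a, rfl⟩ : ∃ d, a = d + 1 := ⟨a - 1, by omega⟩
    have := psum_succ y (a + 1)
    have := h.y_succ a
    have := h.mono (le_max_right (hy a) (hx (a + 1)))
    omega
  | succ b hb ih =>
    have := psum_succ y (b + 1)
    have := h.y_succ b
    have := h.mono (le_max_left (hy b) (hx (b + 1)))
    omega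

theorem psum_z (h : Image M hx hy hz K S x y z) {b c : ℕ} (hbc : b ≤ c) :
    psum z (c + 1) - psum z b ≤ S (hz c) - S (hy b) := by
  induction c, hbc using Nat.le_induction with
  | base =>
    rcases Nat.eq_zero_or_pos b with rfl | hb
    · have := psum_succ z 0
      have := h.z_zero
      omega
    · obtain ⟨b, rfl⟩ : ∃ d, b = d + 1 := ⟨b - 1, by omega⟩
      have := psum_succ z (b + 1)
      have := h.z_succ b
      have := h.mono (le_max_right (hz b) (hy (b + 1)))
      omega
  | succ c hc ih =>
    have := psum_succ z (c + 1)
    have := h.z_succ c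
    have := h.mono (le_max_left (hz c) (hy (c + 1)))
    omega

theorem single {N : ℕ} {j : ℤ} (h : Image (N + 1) hx hy hz K S x y z)
    (h0 : x 0 + S (hz N) - S (hx 0) ≤ j) (hK : x 0 + S (hz N) - S K ≤ j)
    (hM : S (hz (N + 1)) - S (hx 0) ≤ j)
    (hxM : x (N + 1) + (S (hx N) - S (hx 0) + y (N + 1) + z (N + 1)) ≤ j) :
    Single (N + 1) (psum x) (psum y) (psum z) j := by
  have x1 := psum_succ x 0
  rw [psum_zero_right] at x1
  simp only [zero_add] at x1
  constructor
  · intro a b h1 h2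
    have k1 := h.psum_x (a := a) (by omega)
    have k3 := h.psum_z (show b ≤ N by omega)
    rcases Nat.eq_zero_or_pos a with rfl | ha
    · have k2 := h.psum_y_zero b
      have := psum_zero_right y
      simp only [zero_add] at *
      omega
    · have k2 := h.psum_y ha h1
      omega
  · intro a b h1 h2 h3
    rcases Nat.lt_or_ge a (N + 1) with ha | ha
    · have k1 := h.psum_x ha
      have k2 := h.psum_y h1 h2
      have k3 := h.psum_z h3
      omega
    · obtain rfl : a = N + 1 := by omega
      obtain rfl : b = N + 1 := by omega
      have k1 := h.psum_x (show N < N + 1 by omega)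
      have := psum_succ x (N + 1)
      have := psum_succ y (N + 1)
      have := psum_succ z (N + 1)
      omega

theorem double_le (h : Image M hx hy hz K S x y z) {b : ℕ} (hb : b ≤ M) :
    psum y (b + 1) - psum z b + psum z (M + 1) ≤ S (hz M) - S K := by
  have := h.psum_y_zero b
  have := h.psum_z hb
  omega

end Image

theorem monotone_ediv {m : ℤ} (hm : 0 < m) : Monotone fun r : ℤ => r / m :=
  fun _ _ h => Int.ediv_le_ediv hm h

theorem add_self_ediv {m : ℤ} (hm : 0 < m) (r : ℤ) : (r + m) / m = r / m + 1 := by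
  simpa using Int.add_mul_ediv_right r 1 hm.ne'

theorem monotone_sub_ediv {m : ℤ} (hm : 0 < m) : Monotone fun r : ℤ => r - r / m := by
  refine monotone_int_of_le_succ fun r => ?_
  have := add_self_ediv hm r
  have := monotone_ediv hm (show r + 1 ≤ r + m by omega)
  simp only at this
  omega

/-- The rows obtained from the potentials by a monotone map `S`, with prescribed boundary
entries `p`, `q` and tail `r` in the first row. -/
theorem image_pot {M : ℕ} (x y z : ℕ → ℕ) (K : ℤ) {S : ℤ → ℤ} (hS : Monotone S) (p q : ℕ)
    (r : ℕ → ℕ) :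
    Image M (potX M x) (potY M x y K) (potZ M x y z K) K S
      (fun c => if c = 0 then p else if c = M then q else if c < M then
        (S (potX M x c) - S (potX M x (c - 1))).toNat else r c)
      (fun c => (S (potY M x y K c) - S (potY M x y K c - y c)).toNat)
      (fun c => (S (potZ M x y z K c) - S (potZ M x y z K c - z c)).toNat) where
  mono := hS
  x_succ c hc := by
    rw [if_neg (by omega), if_neg (by omega), if_pos hc, Nat.add_sub_cancel,
      Int.toNat_of_nonneg (sub_nonneg.2 (hS ?_))]
    have := monotone_psum x (show min (c + 1) M ≤ min (c + 1 + 1) M by omega)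
    simp only [potX]
    omega
  y_zero := by
    rw [Int.toNat_of_nonneg (sub_nonneg.2 (hS (by omega)))]
    simp [potY]
  y_succ c := by
    rw [Int.toNat_of_nonneg (sub_nonneg.2 (hS (by omega)))]
    simp [potY]
  z_zero := by
    rw [Int.toNat_of_nonneg (sub_nonneg.2 (hS (by omega)))]
    simp [potZ]
  z_succ c := by
    rw [Int.toNat_of_nonneg (sub_nonneg.2 (hS (by omega)))]
    simp [potZ]

theorem exists_add_of_le {k : ℕ} {a b : ℤ} (ha : 0 ≤ a) (hb : 0 ≤ b) (h : k ≤ a + b) :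
    ∃ p q : ℕ, k = p + q ∧ (p : ℤ) ≤ a ∧ (q : ℤ) ≤ b :=
  ⟨min k a.toNat, k - min k a.toNat, by omega, by omega, by omega⟩

/-- Splitting off a level one point. -/
theorem Single.exists_split_one {M : ℕ} {x y z : ℕ → ℕ} {m μ : ℤ} (hM : 2 ≤ M) (hm : 1 ≤ m)
    (g : Single M (psum x) (psum y) (psum z) m)
    (hμ : ∀ b, b ≤ M → psum y (b + 1) - psum z b + psum z (M + 1) ≤ μ)
    (hgood : ∀ a b, 1 ≤ a → a + 1 ≤ M → b + 1 ≤ M →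
      psum x 1 + psum y (b + 1) - psum z b + psum z M
        + (psum x (a + 1) - psum x 1 - psum y a + psum y (M + 1) - psum z M + psum z (M + 1))
        ≤ m + μ) :
    ∃ tx ux ty uy tz uz : ℕ → ℕ, x = tx + ux ∧ y = ty + uy ∧ z = tz + uz ∧
      Single M (psum tx) (psum ty) (psum tz) 1 ∧
      Single M (psum ux) (psum uy) (psum uz) (m - 1) ∧
      ∀ b b', b ≤ M → b' ≤ M → psum ty (b + 1) - psum tz b + psum tz (M + 1)
        + (psum uy (b' + 1) - psum uz b' + psum uz (M + 1)) ≤ μ := by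
  obtain ⟨N, rfl⟩ : ∃ N, M = N + 1 := ⟨M - 1, by omega⟩
  have hA := g.pathA
  have hB := g.pathB
  have X0 := psum_zero_right x
  have Y0 := psum_zero_right y
  have Z0 := psum_zero_right z
  have hA0 : ∀ b, b ≤ N → psum x 1 + psum y (b + 1) - psum z b + psum z (N + 1) ≤ m := by
    intro b hb
    have := hA 0 b (by omega) (by omega)
    simp only [zero_add] at this
    omega
  obtain ⟨K, hU1, hU2, hK⟩ : ∃ K : ℤ,
      (∀ b, b ≤ N + 1 → K + (psum y (b + 1) - psum z b + psum z (N + 1 + 1)) ≤ m) ∧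
      (∀ b, b ≤ N → K + (psum x 1 + psum y (b + 1) - psum z b + psum z (N + 1)) ≤ m) ∧
      ((∃ b, b ≤ N + 1 ∧ m ≤ K + (psum y (b + 1) - psum z b + psum z (N + 1 + 1))) ∨
        ∃ b, b ≤ N ∧ m ≤ K + (psum x 1 + psum y (b + 1) - psum z b + psum z (N + 1))) := by
    obtain ⟨b, hb, hbmax, -⟩ :=
      exists_last_argmax (fun b => psum y (b + 1) - psum z b + psum z (N + 1 + 1)) (N + 1)
    obtain ⟨b', hb', hbmax', -⟩ :=
      exists_last_argmax (fun b => psum x 1 + psum y (b + 1) - psum z b + psum z (N + 1)) N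
    refine ⟨min (m - (psum y (b + 1) - psum z b + psum z (N + 1 + 1)))
      (m - (psum x 1 + psum y (b' + 1) - psum z b' + psum z (N + 1))), fun c hc => ?_,
      fun c hc => ?_, ?_⟩
    · have := hbmax c hc
      omega
    · have := hbmax' c hc
      omega
    · rcases min_choice (m - (psum y (b + 1) - psum z b + psum z (N + 1 + 1)))
        (m - (psum x 1 + psum y (b' + 1) - psum z b' + psum z (N + 1))) with h | h
      · exact Or.inl ⟨b, hb, by omega⟩
      · exact Or.inr ⟨b', hb', by omega⟩
  have hL1 : ∀ a b, 1 ≤ a → a ≤ b → b ≤ N + 1 → a ≤ N → psum x (a + 1) - psum x 1 - psum y a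
      + psum y (b + 1) - psum z b + psum z (N + 1 + 1) ≤ K + μ := by
    intro a b h1 h2 h3 h4
    have := hB a b h1 h2 h3
    rcases hK with ⟨b', hb', hK⟩ | ⟨b', hb', hK⟩
    · have := hμ b' hb'
      omega
    · rcases Nat.lt_or_ge b (N + 1) with h | h
      · have := hA a b h2 h
        have := hμ b' (by omega)
        omega
      · obtain rfl : b = N + 1 := by omega
        have := hgood a b' h1 (by omega) (by omega)
        omega
  have hL2 : ∀ a b, 1 ≤ a → a ≤ b → b ≤ N → psum x (a + 1) - psum y a
      + psum y (b + 1) - psum z b + psum z (N + 1) ≤ m + K := by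
    intro a b h1 h2 h3
    have := hA a b h2 (by omega)
    rcases hK with ⟨b', hb', hK⟩ | ⟨b', hb', hK⟩
    · rcases Nat.lt_or_ge b' (N + 1) with h | h
      · have := hB a b h1 h2 (by omega)
        have := hA0 b' (by omega)
        omega
      · obtain rfl : b' = N + 1 := by omega
        have := hA0 b h3
        have := hB a (N + 1) h1 (by omega) le_rfl
        omega
    · have := hA0 b' hb'
      omega
  have ex : ∀ a, a ≤ N → potX (N + 1) x a = psum x (a + 1) - psum x 1 := by
    intro a ha
    rw [potX, min_eq_left (by omega)]
  have exN : potX (N + 1) x (N + 1) = psum x (N + 1) - psum x 1 := by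
    rw [potX, min_eq_right (by omega)]
  have ex0 : potX (N + 1) x 0 = 0 := by rw [ex 0 (by omega)]; simp
  have hxmono := monotone_psum x
  have hymono := monotone_psum y
  have hzmono := monotone_psum z
  have hZm : potZ (N + 1) x y z K (N + 1) ≤ m := by
    refine potZ_le (fun b hb => ?_) (fun a b h1 h2 h3 => ?_)
    · have := hU1 b hb
      omega
    · have := hB a b h1 h2 h3
      rcases Nat.lt_or_ge N a with h | h
      · obtain rfl : a = N + 1 := by omega
        have := hxmono (show N + 1 ≤ N + 1 + 1 by omega)
        omega
      · have := ex a h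
        omega
  have hZK : potZ (N + 1) x y z K (N + 1) ≤ K + μ := by
    refine potZ_le (fun b hb => ?_) (fun a b h1 h2 h3 => ?_)
    · have := hμ b hb
      omega
    · rcases Nat.lt_or_ge N a with h | h
      · obtain rfl : a = N + 1 := by omega
        obtain rfl : b = N + 1 := by omega
        have := hL1 N (N + 1) (by omega) (by omega) le_rfl le_rfl
        have := hymono (show N ≤ N + 1 by omega)
        omega
      · have := hL1 a b h1 h2 h3 h
        have := ex a h
        omega
  have hQ0 : potZ (N + 1) x y z K N ≤ m - psum x 1 := by
    refine potZ_le (fun b hb => ?_) (fun a b h1 h2 h3 => ?_)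
    · have := hU2 b hb
      omega
    · have := hA a b h2 (by omega)
      have := ex a (by omega)
      omega
  have hQK : potZ (N + 1) x y z K N ≤ m - psum x 1 + K := by
    refine potZ_le (fun b hb => ?_) (fun a b h1 h2 h3 => ?_)
    · have := hA0 b hb
      omega
    · have := hL2 a b h1 h2 h3
      have := ex a (by omega)
      omega
  have hT := monotone_ediv (m := m) (by omega)
  have hU := monotone_sub_ediv (m := m) (by omega)
  have hTm := add_self_ediv (m := m) (by omega)
  have x1 : psum x 1 = x 0 := by simp [psum]
  set Q := potZ (N + 1) x y z K N with hQ
  set R := potZ (N + 1) x y z K (N + 1) with hR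
  set W := potY (N + 1) x y K (N + 1) with hW
  have T0 : (0 : ℤ) / m = 0 := Int.zero_ediv m
  have T1 := hTm 0
  have TK := hTm K
  rw [zero_add] at T1
  have hTQ0 := hT (show Q ≤ m by omega)
  have hTQK := hT (show Q ≤ K + m by omega)
  have hUQ0 := hU (show Q ≤ m by omega)
  have hUQK := hU (show Q ≤ K + m by omega)
  have hTR := hT hZm
  have hUR := hU hZm
  simp only at hTQ0 hTQK hUQ0 hUQK hTR hUR
  obtain ⟨p, q, hpq, hp, hq⟩ : ∃ p q : ℕ, x 0 = p + q ∧
      (p : ℤ) ≤ 1 - Q / m + min 0 (K / m) ∧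
      (q : ℤ) ≤ m - 1 - (Q - Q / m) + min 0 (K - K / m) := by
    refine exists_add_of_le (by omega) (by omega) ?_
    rcases le_total 0 K with h | h
    · have := hT h
      have := hU h
      simp only at *
      omega
    · have := hT h
      have := hU h
      simp only at *
      omega
  have hxy : potX (N + 1) x N ≤ W - y (N + 1) := by
    rw [hW, potY, ex N le_rfl, exN]
    omega
  have hyz : W ≤ R - z (N + 1) := by
    rw [hR, potZ]
    omega
  have hxN := ex N le_rfl
  have hxN0 := hxmono (show 1 ≤ N + 1 by omega)
  have hBN := hB (N + 1) (N + 1) (by omega) le_rfl le_rfl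
  have hxs := psum_succ x (N + 1)
  have hys := psum_succ y (N + 1)
  have hzs := psum_succ z (N + 1)
  have a1 := hT hxy
  have a2 := hT hyz
  have a3 := hU hxy
  have a4 := hU hyz
  have a5 := hT (show W - y (N + 1) ≤ W by omega)
  have a6 := hT (show R - z (N + 1) ≤ R by omega)
  have a7 := hU (show W - y (N + 1) ≤ W by omega)
  have a8 := hU (show R - z (N + 1) ≤ R by omega)
  simp only at a1 a2 a3 a4 a5 a6 a7 a8
  obtain ⟨p', q', hpq', hp', hq'⟩ : ∃ p' q' : ℕ, x (N + 1) = p' + q' ∧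
      (p' : ℤ) ≤ 1 - (potX (N + 1) x N / m + (W / m - (W - y (N + 1)) / m)
        + (R / m - (R - z (N + 1)) / m)) ∧
      (q' : ℤ) ≤ m - 1 - (potX (N + 1) x N - potX (N + 1) x N / m
        + (W - W / m - (W - y (N + 1) - (W - y (N + 1)) / m))
        + (R - R / m - (R - z (N + 1) - (R - z (N + 1)) / m))) :=
    exists_add_of_le (by omega) (by omega) (by omega)
  have tI := image_pot (M := N + 1) x y z K hT p p' 0
  have uI := image_pot (M := N + 1) x y z K hU q q' x
  refine ⟨_, _, _, _, _, _, ?_, ?_, ?_, tI.single ?_ ?_ ?_ ?_, uI.single ?_ ?_ ?_ ?_, ?_⟩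
  · funext c
    simp only [Pi.add_apply]
    split_ifs with h1 h2 h3
    · rw [h1, hpq]
    · rw [h2, hpq']
    · obtain ⟨c, rfl⟩ : ∃ d, c = d + 1 := ⟨c - 1, by omega⟩
      have k1 := ex (c + 1) (by omega)
      have k2 := ex c (by omega)
      have k3 := psum_succ x (c + 1)
      have k4 := hT (show potX (N + 1) x c ≤ potX (N + 1) x (c + 1) by omega)
      have k5 := hU (show potX (N + 1) x c ≤ potX (N + 1) x (c + 1) by omega)
      simp only [Nat.add_sub_cancel] at *
      omega
    · simp
  · funext c
    have k4 := hT (show potY (N + 1) x y K c - y c ≤ potY (N + 1) x y K c by omega)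
    have k5 := hU (show potY (N + 1) x y K c - y c ≤ potY (N + 1) x y K c by omega)
    simp only [Pi.add_apply] at *
    omega
  · funext c
    have k4 := hT (show potZ (N + 1) x y z K c - z c ≤ potZ (N + 1) x y z K c by omega)
    have k5 := hU (show potZ (N + 1) x y z K c - z c ≤ potZ (N + 1) x y z K c by omega)
    simp only [Pi.add_apply] at *
    omega
  · simp only [if_true, ex0, T0, ← hQ]
    omega
  · simp only [if_true, ← hQ]
    omega
  · simp only [ex0, T0, ← hR]
    omega
  · simp only [ex0, T0, if_true, Nat.add_one_ne_zero, if_false, ← hR, ← hW]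
    omega
  · simp only [if_true, ex0, T0, ← hQ]
    omega
  · simp only [if_true, ← hQ]
    omega
  · simp only [ex0, T0, ← hR]
    omega
  · simp only [ex0, T0, if_true, Nat.add_one_ne_zero, if_false, ← hR, ← hW]
    omega
  · intro b b' hb hb'
    have k1 := tI.double_le hb
    have k2 := uI.double_le hb'
    rw [← hR] at k1 k2
    omega

theorem Grid.splits {M : ℕ} {x y z : ℕ → ℕ} {v w : ℕ} {m : ℤ} (hM : 2 ≤ M) (hm : 1 ≤ m)
    (g : Grid M (psum x) (psum y) (psum z) v w m) : Splits M x y z v w m := by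
  rcases Nat.eq_zero_or_pos w with rfl | hw
  swap
  · exact g.splits_of_pos hm (by omega) hw
  have hs : Single M (psum x) (psum y) (psum z) m := ⟨g.pathA, g.pathB⟩
  obtain ⟨b, hb, hbmax, -⟩ :=
    exists_last_argmax (fun b => psum y (b + 1) - psum z b + psum z (M + 1)) M
  have hE := g.pathE b hb
  by_cases hbad : ∃ a b', 1 ≤ a ∧ a + 1 ≤ M ∧ b' + 1 ≤ M ∧
      m + (psum y (b + 1) - psum z b + psum z (M + 1)) <
        psum x 1 + psum y (b' + 1) - psum z b' + psum z M
        + (psum x (a + 1) - psum x 1 - psum y a + psum y (M + 1) - psum z M + psum z (M + 1))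
  · obtain ⟨hm2, tx, ux, ty, uy, tz, uz, rfl, rfl, rfl, ht, hu, h⟩ :=
      hs.exists_split_two hbmax hbad
    exact splits_of_single (by omega) (Or.inr rfl) hm2 ht hu h (by omega)
  · push Not at hbad
    obtain ⟨tx, ux, ty, uy, tz, uz, rfl, rfl, rfl, ht, hu, h⟩ :=
      hs.exists_split_one hM hm hbmax hbad
    exact splits_of_single (by omega) (Or.inl rfl) hm ht hu h (by omega)

/-- `L` is a path from `(p, q)` to `(p', q')`. -/
def IsPath (p q p' q' : ℕ) (L : List (ℕ × ℕ)) : Prop :=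
  L.IsChain RootStep ∧ L.head? = some (p, q) ∧ L.getLast? = some (p', q')

/-- The horizontal segment of length `k` starting at `(p, q)`. -/
def seg (p : ℕ) : ℕ → ℕ → List (ℕ × ℕ)
  | q, 0 => [(p, q)]
  | q, k + 1 => (p, q) :: seg p (q + 1) k

theorem mem_seg {p q k : ℕ} {x : ℕ × ℕ} : x ∈ seg p q k ↔ x.1 = p ∧ q ≤ x.2 ∧ x.2 ≤ q + k := by
  obtain ⟨a, b⟩ := x
  induction k generalizing q with
  | zero => simp [seg]; omega
  | succ k ih => simp [seg, ih]; omega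

theorem IsPath.cons {p q p' q' : ℕ} {x : ℕ × ℕ} {L : List (ℕ × ℕ)} (hL : IsPath p q p' q' L)
    (hx : RootStep x (p, q)) : IsPath x.1 x.2 p' q' (x :: L) := by
  obtain ⟨h1, h2, h3⟩ := hL
  cases L with
  | nil => simp at h2
  | cons y L =>
    simp only [List.head?_cons, Option.some.injEq] at h2
    subst h2
    exact ⟨List.isChain_cons_cons.2 ⟨hx, h1⟩, rfl, by rw [List.getLast?_cons_cons, h3]⟩

theorem isPath_seg (p q k : ℕ) : IsPath p q p (q + k) (seg p q k) := by
  induction k generalizing q with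
  | zero => exact ⟨List.isChain_singleton _, rfl, rfl⟩
  | succ k ih =>
    have := (ih (q + 1)).cons (x := (p, q)) (Or.inl ⟨rfl, rfl⟩)
    rwa [show q + 1 + k = q + (k + 1) by omega] at this

theorem IsPath.seg_append {p q k p' q' : ℕ} {L : List (ℕ × ℕ)}
    (hL : IsPath (p + 1) (q + k) p' q' L) : IsPath p q p' q' (seg p q k ++ L) := by
  induction k generalizing q with
  | zero => exact hL.cons (x := (p, q)) (Or.inr ⟨rfl, rfl⟩)
  | succ k ih =>
    exact (ih (q := q + 1) (by rwa [show q + 1 + k = q + (k + 1) by omega])).cons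
      (x := (p, q)) (Or.inl ⟨rfl, rfl⟩)

theorem IsPath.cases {p q p' q' : ℕ} {L : List (ℕ × ℕ)} (hL : IsPath p q p' q' L) :
    (p' = p ∧ ∃ k, q' = q + k ∧ L = seg p q k) ∨
      ∃ k L', L = seg p q k ++ L' ∧ IsPath (p + 1) (q + k) p' q' L' := by
  induction L generalizing p q with
  | nil => simp [IsPath] at hL
  | cons a L ih =>
    obtain ⟨h1, h2, h3⟩ := hL
    simp only [List.head?_cons, Option.some.injEq] at h2
    subst h2
    cases L with
    | nil =>
      simp only [List.getLast?_singleton, Option.some.injEq, Prod.mk.injEq] at h3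
      exact Or.inl ⟨h3.1.symm, 0, h3.2.symm, rfl⟩
    | cons b L =>
      obtain ⟨h4, h5⟩ := List.isChain_cons_cons.1 h1
      rw [List.getLast?_cons_cons] at h3
      obtain ⟨b1, b2⟩ := b
      rcases h4 with ⟨h6, h7⟩ | ⟨h6, h7⟩ <;> simp only at h6 h7 <;> subst h6 h7
      · rcases ih ⟨h5, rfl, h3⟩ with ⟨h8, k, h9, h10⟩ | ⟨k, L', h8, h9⟩
        · exact Or.inl ⟨h8, k + 1, by omega, by rw [h10]; rfl⟩
        · refine Or.inr ⟨k + 1, L', by rw [h8]; rfl, ?_⟩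
          rwa [show q + (k + 1) = q + 1 + k by omega]
      · exact Or.inr ⟨0, _, rfl, h5, rfl, h3⟩

theorem IsPath.le {p q p' q' : ℕ} {L : List (ℕ × ℕ)} (hL : IsPath p q p' q' L) :
    p ≤ p' ∧ q ≤ q' := by
  induction L generalizing p q with
  | nil => simp [IsPath] at hL
  | cons a L ih =>
    obtain ⟨h1, h2, h3⟩ := hL
    simp only [List.head?_cons, Option.some.injEq] at h2
    subst h2
    cases L with
    | nil =>
      simp only [List.getLast?_singleton, Option.some.injEq, Prod.mk.injEq] at h3
      omega
    | cons b L =>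
      obtain ⟨h4, h5⟩ := List.isChain_cons_cons.1 h1
      rw [List.getLast?_cons_cons] at h3
      have := ih (p := b.1) (q := b.2) ⟨h5, rfl, h3⟩
      rcases h4 with h4 | h4 <;> simp only at h4 <;> omega

theorem isPath_one_row {p q q' : ℕ} {L : List (ℕ × ℕ)} :
    IsPath p q p q' L ↔ ∃ k, q' = q + k ∧ L = seg p q k := by
  constructor
  · intro h
    rcases h.cases with ⟨-, h⟩ | ⟨k, L', -, h⟩
    · exact h
    · have := h.le
      omega
  · rintro ⟨k, rfl, rfl⟩
    exact isPath_seg p q k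

theorem isPath_two_rows {p q q' : ℕ} {L : List (ℕ × ℕ)} :
    IsPath p q (p + 1) q' L ↔
      ∃ k l, q' = q + k + l ∧ L = seg p q k ++ seg (p + 1) (q + k) l := by
  constructor
  · intro h
    rcases h.cases with ⟨h', -⟩ | ⟨k, L', rfl, h'⟩
    · omega
    · obtain ⟨l, h1, rfl⟩ := isPath_one_row.1 h'
      exact ⟨k, l, h1, rfl⟩
  · rintro ⟨k, l, rfl, rfl⟩
    exact (isPath_seg (p + 1) (q + k) l).seg_append

theorem isPath_three_rows {p q q' : ℕ} {L : List (ℕ × ℕ)} :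
    IsPath p q (p + 2) q' L ↔ ∃ k l r, q' = q + k + l + r ∧
      L = seg p q k ++ (seg (p + 1) (q + k) l ++ seg (p + 2) (q + k + l) r) := by
  constructor
  · intro h
    rcases h.cases with ⟨h', -⟩ | ⟨k, L', rfl, h'⟩
    · omega
    · obtain ⟨l, r, h1, rfl⟩ := isPath_two_rows.1 h'
      exact ⟨k, l, r, h1, rfl⟩
  · rintro ⟨k, l, r, rfl, rfl⟩
    exact (isPath_two_rows.2 ⟨l, r, rfl, rfl⟩ : IsPath (p + 1) (q + k) _ _ _).seg_append

/-- The values of `s` on the row of roots `α_{p,i}, α_{p,i+1}, …`. -/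
def row (i p : ℕ) (s : ℕ × ℕ → ℕ) (c : ℕ) : ℕ := s (p, i + c)

theorem sum_map_seg (i p c k : ℕ) (s : ℕ × ℕ → ℕ) :
    (((seg p (i + c) k).map s).sum : ℤ) = psum (row i p s) (c + k + 1) - psum (row i p s) c := by
  induction k generalizing c with
  | zero => simp [seg, psum_succ, row]
  | succ k ih =>
    have h1 := ih (c + 1)
    have h2 := psum_succ (row i p s) c
    rw [show c + 1 + k + 1 = c + (k + 1) + 1 by omega] at h1
    simp only [seg, List.map_cons, List.sum_cons, Nat.cast_add, add_assoc i c 1, h1]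
    simp only [row] at *
    omega

theorem sum_map_two_segs (i p c k l : ℕ) (s : ℕ × ℕ → ℕ) :
    (((seg p (i + c) k ++ seg (p + 1) (i + c + k) l).map s).sum : ℤ) =
      psum (row i p s) (c + k + 1) - psum (row i p s) c
      + (psum (row i (p + 1) s) (c + k + l + 1) - psum (row i (p + 1) s) (c + k)) := by
  rw [List.map_append, List.sum_append, Nat.cast_add, sum_map_seg, add_assoc i, sum_map_seg]

theorem sum_map_three_segs (i p c k l r : ℕ) (s : ℕ × ℕ → ℕ) :
    (((seg p (i + c) k ++ (seg (p + 1) (i + c + k) l ++ seg (p + 2) (i + c + k + l) r)).map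
      s).sum : ℤ) = psum (row i p s) (c + k + 1) - psum (row i p s) c
      + (psum (row i (p + 1) s) (c + k + l + 1) - psum (row i (p + 1) s) (c + k)
      + (psum (row i (p + 2) s) (c + k + l + r + 1) - psum (row i (p + 2) s) (c + k + l))) := by
  rw [List.map_append, List.sum_append, Nat.cast_add, sum_map_seg, add_assoc i c k,
    sum_map_two_segs]

theorem isType1_iff {n i : ℕ} {L : List (ℕ × ℕ)} : IsType1 n i L ↔ (∀ x ∈ L, inR n i x) ∧
    (IsPath 1 i i (2 * n - i - 1) L ∨ IsPath 1 (i + 1) i (2 * n - i) L) := by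
  constructor
  · rintro ⟨-, h1, h2, h3⟩
    exact ⟨h2, h3.imp (fun h => ⟨h1, h⟩) fun h => ⟨h1, h⟩⟩
  · rintro ⟨h1, h2⟩
    refine ⟨?_, ?_, h1, h2.imp (fun h => h.2) fun h => h.2⟩
    · rintro rfl
      simp [IsPath] at h2
    · rcases h2 with h | h <;> exact h.1

theorem isType2_iff {n i : ℕ} {L₁ L₂ : List (ℕ × ℕ)} : IsType2 n i L₁ L₂ ↔
    ∃ j, 1 ≤ j ∧ j < i ∧ IsPath 1 i j (2 * n - j) L₁ ∧ IsPath 2 i (j + 1) (2 * n - j - 1) L₂ ∧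
      (∀ x ∈ L₁, inR n i x) ∧ (∀ x ∈ L₂, inR n i x) ∧ ∀ x ∈ L₁, x ∉ L₂ := by
  constructor
  · rintro ⟨j, h1, h2, -, -, h3, h4, h5, h6, h7, h8, h9, h10, h11⟩
    exact ⟨j, h1, h2, ⟨h3, h7, h9⟩, ⟨h4, h8, h10⟩, h5, h6, fun x hx hx' => h11 x ⟨hx, hx'⟩⟩
  · rintro ⟨j, h1, h2, ⟨h3, h7, h9⟩, ⟨h4, h8, h10⟩, h5, h6, h11⟩
    refine ⟨j, h1, h2, ?_, ?_, h3, h4, h5, h6, h7, h8, h9, h10, fun x hx => h11 x hx.1 hx.2⟩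
    · rintro rfl
      simp at h7
    · rintro rfl
      simp at h8

theorem cB_eq_two {n i : ℕ} (h1 : i ≠ 1) (hn : i ≠ n) : cB n i = 2 := by
  simp [cB, h1, hn]

theorem mem_SD_three {n M m : ℕ} {s : ℕ × ℕ → ℕ} (hn : 2 * n = M + 6) (hM : 2 ≤ M) :
    s ∈ SD n 3 m ↔ (∀ β, ¬ inR n 3 β → s β = 0) ∧
      Grid M (psum (row 3 1 s)) (psum (row 3 2 s)) (psum (row 3 3 s))
        (row 3 1 s (M + 1)) (row 3 2 s (M + 1)) m ∧
      psum (row 3 1 s) (M + 3) + psum (row 3 2 s) (M + 2) ≤ 2 * m := by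
  have hc : cB n 3 = 2 := cB_eq_two (by omega) (by omega)
  constructor
  · rintro ⟨h0, h1, h2⟩
    have e1 (a b : ℕ) (h : b < a) (ha : a ≤ M + 1) (hb : b ≤ M) :
        psum (row 3 1 s) (a + 1) - psum (row 3 2 s) a + psum (row 3 2 s) (M + 2)
          + psum (row 3 2 s) (b + 1) - psum (row 3 3 s) b + psum (row 3 3 s) (M + 1) ≤ 2 * m := by
      obtain ⟨l, hl⟩ := Nat.exists_eq_add_of_le ha
      obtain ⟨r, hr⟩ := Nat.exists_eq_add_of_le hb
      have := h2 (seg 1 3 a ++ seg 2 (3 + a) l) (seg 2 3 b ++ seg 3 (3 + b) r)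
        (isType2_iff.2 ⟨2, by omega, by omega, isPath_two_rows.2 ⟨a, l, by omega, rfl⟩,
          isPath_two_rows.2 ⟨b, r, by omega, rfl⟩, ?_, ?_, ?_⟩)
      · have k1 := sum_map_two_segs 3 1 0 a l s
        have k2 := sum_map_two_segs 3 2 0 b r s
        rw [List.map_append, List.sum_append, hc] at this
        simp only [zero_add, add_zero, psum_zero_right, Nat.reduceAdd, ← hl, ← hr, add_assoc] at k1 k2
        omega
      all_goals
        simp only [List.mem_append, mem_seg, inR]
        omega
    refine ⟨h0, Grid.of_psum ?_ ?_ ?_ ?_, ?_⟩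
    · intro a b hab hb
      obtain ⟨l, rfl⟩ := Nat.exists_eq_add_of_le hab
      obtain ⟨r, hr⟩ := Nat.exists_eq_add_of_le hb
      have := h1 (seg 1 3 a ++ (seg 2 (3 + a) l ++ seg 3 (3 + a + l) r))
        (isType1_iff.2 ⟨?_, Or.inl (isPath_three_rows.2 ⟨a, l, r, by omega, rfl⟩)⟩)
      · have k := sum_map_three_segs 3 1 0 a l r s
        simp only [zero_add, add_zero, psum_zero_right, Nat.reduceAdd] at k
        rw [show a + l + r + 1 = M by omega] at k
        omega
      · simp only [List.mem_append, mem_seg, inR]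
        omega
    · intro a b ha hab hb
      obtain ⟨k, rfl⟩ := Nat.exists_eq_add_of_le ha
      obtain ⟨l, rfl⟩ := Nat.exists_eq_add_of_le hab
      obtain ⟨r, hr⟩ := Nat.exists_eq_add_of_le hb
      have := h1 (seg 1 4 k ++ (seg 2 (4 + k) l ++ seg 3 (4 + k + l) r))
        (isType1_iff.2 ⟨?_, Or.inr (isPath_three_rows.2 ⟨k, l, r, by omega, rfl⟩)⟩)
      · have k := sum_map_three_segs 3 1 1 k l r s
        simp only [Nat.reduceAdd, ← hr] at k
        omega
      · simp only [List.mem_append, mem_seg, inR]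
        omega
    · intro a b hab ha
      have := e1 a b hab (by omega) (by omega)
      have := psum_succ (row 3 2 s) (M + 1)
      simp only [Nat.reduceAdd, add_assoc] at *
      omega
    · intro b hb
      have := e1 (M + 1) b (by omega) le_rfl hb
      have := psum_succ (row 3 2 s) (M + 1)
      have := psum_succ (row 3 1 s) (M + 1)
      simp only [Nat.reduceAdd, add_assoc] at *
      omega
    · have := h2 (seg 1 3 (M + 2)) (seg 2 3 (M + 1))
        (isType2_iff.2 ⟨1, by omega, by omega, isPath_one_row.2 ⟨M + 2, by omega, rfl⟩,
          isPath_one_row.2 ⟨M + 1, by omega, rfl⟩, ?_, ?_, ?_⟩)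
      · have k1 := sum_map_seg 3 1 0 (M + 2) s
        have k2 := sum_map_seg 3 2 0 (M + 1) s
        rw [List.map_append, List.sum_append, hc] at this
        simp only [zero_add, add_zero, psum_zero_right, Nat.reduceAdd, add_assoc] at k1 k2
        omega
      all_goals
        simp only [mem_seg, inR]
        omega
  · rintro ⟨h0, g, hD⟩
    refine ⟨h0, fun L hL => ?_, fun L₁ L₂ hL => ?_⟩
    · obtain ⟨-, h | h⟩ := isType1_iff.1 hL
      · obtain ⟨a, l, r, h, rfl⟩ := isPath_three_rows.1 h
        have k := sum_map_three_segs 3 1 0 a l r s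
        have := g.pathA a (a + l) (by omega) (by omega)
        simp only [zero_add, add_zero, psum_zero_right, Nat.reduceAdd] at k
        rw [show a + l + r + 1 = M by omega] at k
        simp only [Nat.reduceAdd]
        omega
      · obtain ⟨a, l, r, h, rfl⟩ := isPath_three_rows.1 h
        have k := sum_map_three_segs 3 1 1 a l r s
        have := g.pathB (1 + a) (1 + a + l) (by omega) (by omega) (by omega)
        simp only [Nat.reduceAdd] at k
        rw [show 1 + a + l + r + 1 = M + 1 by omega] at k
        simp only [Nat.reduceAdd]
        omega
    · obtain ⟨j, hj1, hj2, p1, p2, -, -, hd⟩ := isType2_iff.1 hL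
      rw [List.map_append, List.sum_append, hc]
      obtain rfl | rfl : j = 1 ∨ j = 2 := by omega
      · obtain ⟨a, ha, rfl⟩ := isPath_one_row.1 p1
        obtain ⟨b, hb, rfl⟩ := isPath_one_row.1 p2
        have k1 := sum_map_seg 3 1 0 a s
        have k2 := sum_map_seg 3 2 0 b s
        obtain rfl : a = M + 2 := by omega
        obtain rfl : b = M + 1 := by omega
        simp only [zero_add, add_zero, psum_zero_right, Nat.reduceAdd, add_assoc] at k1 k2
        omega
      · obtain ⟨a, l, ha, rfl⟩ := isPath_two_rows.1 p1
        obtain ⟨b, r, hb, rfl⟩ := isPath_two_rows.1 p2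
        have k1 := sum_map_two_segs 3 1 0 a l s
        have k2 := sum_map_two_segs 3 2 0 b r s
        have hab : b < a := by
          by_contra hba
          refine hd (2, 3 + a) ?_ ?_ <;> simp only [List.mem_append, mem_seg, true_and] <;> omega
        have := psum_succ (row 3 2 s) (M + 1)
        have := psum_succ (row 3 1 s) (M + 1)
        simp only [zero_add, add_zero, psum_zero_right, Nat.reduceAdd] at k1 k2
        rw [show a + l + 1 = M + 2 by omega] at k1
        rw [show b + r + 1 = M + 1 by omega] at k2
        simp only [Nat.reduceAdd, add_assoc] at *
        rcases Nat.lt_or_ge M a with h | h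
        · obtain rfl : a = M + 1 := by omega
          simp only [Nat.reduceAdd, add_assoc] at *
          have := g.pathE b (by omega)
          omega
        · have := g.pathC a b hab h
          omega

theorem psum_congr {f g : ℕ → ℕ} {a : ℕ} (h : ∀ c < a, f c = g c) : psum f a = psum g a :=
  Finset.sum_congr rfl fun c hc => by rw [h c (Finset.mem_range.1 hc)]

open Classical in
/-- A splitting of the rows of `s` is a splitting of `s`. -/
theorem exists_split_of_rows {n i : ℕ} {s : ℕ × ℕ → ℕ} {t u : ℕ → ℕ → ℕ}
    (hs : ∀ β, ¬ inR n i β → s β = 0)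
    (h : ∀ p c, inR n i (p, i + c) → row i p s c = t p c + u p c) :
    ∃ T U : ℕ × ℕ → ℕ, s = T + U ∧ (∀ β, ¬ inR n i β → T β = 0) ∧ (∀ β, ¬ inR n i β → U β = 0) ∧
      (∀ p c, inR n i (p, i + c) → row i p T c = t p c) ∧
      ∀ p c, inR n i (p, i + c) → row i p U c = u p c := by
  refine ⟨fun x => if inR n i x then t x.1 (x.2 - i) else 0,
    fun x => if inR n i x then u x.1 (x.2 - i) else 0, ?_, fun β hβ => if_neg hβ,
    fun β hβ => if_neg hβ, fun p c hc => ?_, fun p c hc => ?_⟩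
  · funext ⟨p, q⟩
    by_cases hx : inR n i (p, q)
    · obtain ⟨c, rfl⟩ := Nat.exists_eq_add_of_le hx.2.2.1
      simpa [hx, row] using h p c hx
    · simp [hx, hs _ hx]
  · simp [row, hc]
  · simp [row, hc]

theorem mem_SD_three_of_rows {n M j : ℕ} {s : ℕ × ℕ → ℕ} {x y z : ℕ → ℕ} {v v' w : ℕ}
    (hn : 2 * n = M + 6) (hM : 2 ≤ M) (hs : ∀ β, ¬ inR n 3 β → s β = 0)
    (hx : ∀ c ≤ M, row 3 1 s c = x c) (hy : ∀ c ≤ M, row 3 2 s c = y c)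
    (hz : ∀ c ≤ M, row 3 3 s c = z c) (hv : row 3 1 s (M + 1) = v)
    (hv' : row 3 1 s (M + 2) = v') (hw : row 3 2 s (M + 1) = w)
    (g : Grid M (psum x) (psum y) (psum z) v w j)
    (hD : psum x (M + 1) + psum y (M + 1) + v + v' + w ≤ 2 * j) : s ∈ SD n 3 j := by
  have ex (a : ℕ) (ha : a ≤ M + 1) : psum (row 3 1 s) a = psum x a :=
    psum_congr fun c hc => hx c (by omega)
  have ey (a : ℕ) (ha : a ≤ M + 1) : psum (row 3 2 s) a = psum y a :=
    psum_congr fun c hc => hy c (by omega)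
  have ez (a : ℕ) (ha : a ≤ M + 1) : psum (row 3 3 s) a = psum z a :=
    psum_congr fun c hc => hz c (by omega)
  refine (mem_SD_three hn hM).2 ⟨hs, Grid.of_psum ?_ ?_ ?_ ?_, ?_⟩
  · intro a b hab hb
    rw [ex _ (by omega), ey _ (by omega), ey _ (by omega), ez _ (by omega), ez _ (by omega)]
    exact g.pathA a b hab hb
  · intro a b ha hab hb
    rw [ex _ (by omega), ex _ (by omega), ey _ (by omega), ey _ (by omega), ez _ (by omega),
      ez _ (by omega)]
    exact g.pathB a b ha hab hb
  · intro a b hab ha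
    rw [ex _ (by omega), ey _ (by omega), ey _ (by omega), ey _ (by omega), ez _ (by omega),
      ez _ (by omega), hw]
    exact g.pathC a b hab ha
  · intro b hb
    rw [ex _ (by omega), ey _ (by omega), ez _ (by omega), ez _ (by omega), hw, hv]
    exact g.pathE b hb
  · rw [psum_succ _ (M + 2), psum_succ _ (M + 1), psum_succ _ (M + 1), ex _ le_rfl, ey _ le_rfl,
      hv, hv', hw]
    omega

theorem exists_split_three {n m : ℕ} {s : ℕ × ℕ → ℕ} (hn : 4 ≤ n) (hm : 1 ≤ m)
    (hs : s ∈ SD n 3 m) : ∃ j, (j = 1 ∨ j = 2) ∧ j ≤ m ∧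
      ∃ t ∈ SD n 3 j, ∃ u ∈ SD n 3 (m - j), s = t + u := by
  obtain ⟨M, hM⟩ : ∃ M, 2 * n = M + 6 := ⟨2 * n - 6, by omega⟩
  obtain ⟨h0, g, hD⟩ := (mem_SD_three hM (by omega)).1 hs
  obtain ⟨j, tx, ux, ty, uy, tz, uz, tv, uv, tw, uw, hj, hjm, hx, hy, hz, hv, hw, gt, gu⟩ :=
    g.splits (by omega) (by omega)
  obtain ⟨k, rfl⟩ : ∃ k : ℕ, j = k := ⟨j.toNat, by omega⟩
  rw [← Nat.cast_sub (by omega)] at gu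
  have t1 := gt.pathE M le_rfl
  have u1 := gu.pathE M le_rfl
  have t2 := gt.monoZ (Nat.le_succ M)
  have u2 := gu.monoZ (Nat.le_succ M)
  rw [psum_succ _ (M + 2), psum_succ _ (M + 1), psum_succ _ (M + 1), hv, hw, hx, hy, psum_add,
    psum_add, ← hx] at hD
  simp only [Nat.succ_eq_add_one] at t2 u2
  obtain ⟨tv', uv', hv', ht, hu⟩ := exists_add_of_le (k := row 3 1 s (M + 2))
    (a := 2 * k - (psum tx (M + 1) + psum ty (M + 1) + tv + tw))
    (b := 2 * (m - k : ℕ) - (psum ux (M + 1) + psum uy (M + 1) + uv + uw))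
    (by omega) (by omega) (by omega)
  set t : ℕ → ℕ → ℕ := fun p c =>
    if p = 1 then if c = M + 1 then tv else if c = M + 2 then tv' else tx c
    else if p = 2 then if c = M + 1 then tw else ty c else tz c with ht
  set u : ℕ → ℕ → ℕ := fun p c =>
    if p = 1 then if c = M + 1 then uv else if c = M + 2 then uv' else ux c
    else if p = 2 then if c = M + 1 then uw else uy c else uz c with hu
  have hsum : ∀ p c, inR n 3 (p, 3 + c) → row 3 p s c = t p c + u p c := by
    rintro p c ⟨h1, h2, h3, h4⟩
    simp only at h1 h2 h3 h4
    simp only [ht, hu]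
    split_ifs with h5 h6 h7 h8 h9
    · rw [h5, h6, hv]
    · rw [h5, h7, hv']
    · rw [h5, hx]; rfl
    · rw [h8, h9, hw]
    · rw [h8, hy]; rfl
    · rw [show p = 3 by omega, hz]; rfl
  obtain ⟨T, U, hTU, T0, U0, hT, hU⟩ := exists_split_of_rows h0 hsum
  have hR (p c : ℕ) (h1 : 1 ≤ p) (h3 : p ≤ 3) (h : p + c ≤ M + 3) : inR n 3 (p, 3 + c) := by
    simp only [inR]
    omega
  refine ⟨k, by omega, by omega, T, mem_SD_three_of_rows hM (by omega) T0 ?_ ?_ ?_ ?_ ?_ ?_ gt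
    (v' := tv') (by omega), U, mem_SD_three_of_rows hM (by omega) U0 ?_ ?_ ?_ ?_ ?_ ?_ gu
    (v' := uv') (by omega), hTU⟩
  all_goals
    try intro c hc
    first | rw [hT _ _ (hR _ _ (by omega) (by omega) (by omega))]
          | rw [hU _ _ (hR _ _ (by omega) (by omega) (by omega))]
    grind

theorem Single.exists_add {M : ℕ} {x y z : ℕ → ℕ} {m : ℤ} (hM : 2 ≤ M) (hm : 1 ≤ m)
    (g : Single M (psum x) (psum y) (psum z) m) :
    ∃ tx ux ty uy tz uz : ℕ → ℕ, x = tx + ux ∧ y = ty + uy ∧ z = tz + uz ∧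
      Single M (psum tx) (psum ty) (psum tz) 1 ∧
      Single M (psum ux) (psum uy) (psum uz) (m - 1) := by
  have hX : 0 ≤ psum x (M + 1) := psum_zero_right x ▸ monotone_psum x (Nat.zero_le _)
  obtain ⟨tx, ux, ty, uy, tz, uz, hx, hy, hz, ht, hu, -⟩ :=
    g.exists_split_one (μ := 2 * m) hM hm
      (fun b hb => by have := g.double_le (by omega) hb; omega)
      fun a b h1 h2 h3 => by
        have hA := g.pathA 0 b (by omega) h3
        have hB := g.pathB a M h1 (by omega) le_rfl
        simp only [zero_add, psum_zero_right] at hA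
        omega
  exact ⟨tx, ux, ty, uy, tz, uz, hx, hy, hz, ht, hu⟩

theorem Single.congr {M : ℕ} {x y z x' y' z' : ℕ → ℕ} {m : ℤ}
    (g : Single M (psum x) (psum y) (psum z) m) (hx : ∀ c ≤ M, x' c = x c)
    (hy : ∀ c ≤ M, y' c = y c) (hz : ∀ c ≤ M, z' c = z c) :
    Single M (psum x') (psum y') (psum z') m := by
  have ex (a : ℕ) (ha : a ≤ M + 1) : psum x' a = psum x a :=
    psum_congr fun c hc => hx c (by omega)
  have ey (a : ℕ) (ha : a ≤ M + 1) : psum y' a = psum y a :=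
    psum_congr fun c hc => hy c (by omega)
  have ez (a : ℕ) (ha : a ≤ M + 1) : psum z' a = psum z a :=
    psum_congr fun c hc => hz c (by omega)
  refine ⟨fun a b hab hb => ?_, fun a b ha hab hb => ?_⟩
  · rw [ex _ (by omega), ey _ (by omega), ey _ (by omega), ez _ (by omega), ez _ (by omega)]
    exact g.pathA a b hab hb
  · rw [ex _ (by omega), ex _ (by omega), ey _ (by omega), ey _ (by omega), ez _ (by omega),
      ez _ (by omega)]
    exact g.pathB a b ha hab hb

theorem mem_SD_two {n M m : ℕ} {s : ℕ × ℕ → ℕ} (hn : 2 * n = M + 4) (hM : 2 ≤ M) :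
    s ∈ SD n 2 m ↔ (∀ β, ¬ inR n 2 β → s β = 0) ∧
      Single M (psum (row 2 1 s)) (psum (row 2 2 s)) (psum 0) m ∧
      psum (row 2 1 s) (M + 2) + psum (row 2 2 s) (M + 1) ≤ 2 * m := by
  have hc : cB n 2 = 2 := cB_eq_two (by omega) (by omega)
  constructor
  · rintro ⟨h0, h1, h2⟩
    refine ⟨h0, ⟨fun a b hab hb => ?_, fun a b ha hab hb => ?_⟩, ?_⟩
    · obtain ⟨l, hl⟩ := Nat.exists_eq_add_of_le (show a + 1 ≤ M by omega)
      have := h1 (seg 1 2 a ++ seg 2 (2 + a) l)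
        (isType1_iff.2 ⟨?_, Or.inl (isPath_two_rows.2 ⟨a, l, by omega, rfl⟩)⟩)
      · have k := sum_map_two_segs 2 1 0 a l s
        simp only [zero_add, add_zero, psum_zero_right, Nat.reduceAdd] at k
        rw [show a + l + 1 = M by omega] at k
        have := monotone_psum (row 2 2 s) hb
        simp only [psum_zero_left]
        omega
      · simp only [List.mem_append, mem_seg, inR]
        omega
    · obtain ⟨k, rfl⟩ := Nat.exists_eq_add_of_le ha
      obtain ⟨l, hl⟩ := Nat.exists_eq_add_of_le (show 1 + k ≤ M by omega)
      have := h1 (seg 1 3 k ++ seg 2 (3 + k) l)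
        (isType1_iff.2 ⟨?_, Or.inr (isPath_two_rows.2 ⟨k, l, by omega, rfl⟩)⟩)
      · have k := sum_map_two_segs 2 1 1 k l s
        simp only [Nat.reduceAdd, ← hl] at k
        have := monotone_psum (row 2 2 s) (show b + 1 ≤ M + 1 by omega)
        simp only [psum_zero_left]
        omega
      · simp only [List.mem_append, mem_seg, inR]
        omega
    · have := h2 (seg 1 2 (M + 1)) (seg 2 2 M)
        (isType2_iff.2 ⟨1, by omega, by omega, isPath_one_row.2 ⟨M + 1, by omega, rfl⟩,
          isPath_one_row.2 ⟨M, by omega, rfl⟩, ?_, ?_, ?_⟩)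
      · have k1 := sum_map_seg 2 1 0 (M + 1) s
        have k2 := sum_map_seg 2 2 0 M s
        rw [List.map_append, List.sum_append, hc] at this
        simp only [zero_add, add_zero, psum_zero_right, Nat.reduceAdd, add_assoc] at k1 k2
        omega
      all_goals
        simp only [mem_seg, inR]
        omega
  · rintro ⟨h0, g, hD⟩
    refine ⟨h0, fun L hL => ?_, fun L₁ L₂ hL => ?_⟩
    · obtain ⟨-, h | h⟩ := isType1_iff.1 hL
      · obtain ⟨a, l, h, rfl⟩ := isPath_two_rows.1 h
        have k := sum_map_two_segs 2 1 0 a l s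
        have := g.pathA a (a + l) (by omega) (by omega)
        simp only [zero_add, add_zero, psum_zero_right, psum_zero_left, Nat.reduceAdd] at k this ⊢
        omega
      · obtain ⟨a, l, h, rfl⟩ := isPath_two_rows.1 h
        have k := sum_map_two_segs 2 1 1 a l s
        have := g.pathB (1 + a) (1 + a + l) (by omega) (by omega) (by omega)
        simp only [psum_zero_left] at this
        simp only [Nat.reduceAdd] at *
        omega
    · obtain ⟨j, hj1, hj2, p1, p2, -, -, hd⟩ := isType2_iff.1 hL
      rw [List.map_append, List.sum_append, hc]
      obtain rfl : j = 1 := by omega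
      obtain ⟨a, ha, rfl⟩ := isPath_one_row.1 p1
      obtain ⟨b, hb, rfl⟩ := isPath_one_row.1 p2
      have k1 := sum_map_seg 2 1 0 a s
      have k2 := sum_map_seg 2 2 0 b s
      obtain rfl : a = M + 1 := by omega
      obtain rfl : b = M := by omega
      simp only [zero_add, add_zero, psum_zero_right, add_assoc, Nat.reduceAdd] at k1 k2
      omega

theorem mem_SD_two_of_rows {n M j : ℕ} {s : ℕ × ℕ → ℕ} {x y z : ℕ → ℕ} {v : ℕ}
    (hn : 2 * n = M + 4) (hM : 2 ≤ M) (hs : ∀ β, ¬ inR n 2 β → s β = 0)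
    (hx : ∀ c ≤ M, row 2 1 s c = x c) (hy : ∀ c ≤ M, row 2 2 s c = y c)
    (hz : ∀ c ≤ M, 0 = z c) (hv : row 2 1 s (M + 1) = v)
    (g : Single M (psum x) (psum y) (psum z) j)
    (hD : psum x (M + 1) + psum y (M + 1) + v ≤ 2 * j) : s ∈ SD n 2 j := by
  refine (mem_SD_two hn hM).2 ⟨hs, g.congr hx hy hz, ?_⟩
  rw [psum_succ _ (M + 1), psum_congr (g := x) fun c hc => hx c (by omega),
    psum_congr (g := y) fun c hc => hy c (by omega), hv]
  omega

theorem exists_split_two {n m : ℕ} {s : ℕ × ℕ → ℕ} (hn : 3 ≤ n) (hs : s ∈ SD n 2 (m + 1)) :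
    ∃ t ∈ SD n 2 1, ∃ u ∈ SD n 2 m, s = t + u := by
  obtain ⟨M, hM⟩ : ∃ M, 2 * n = M + 4 := ⟨2 * n - 4, by omega⟩
  obtain ⟨h0, g, hD⟩ := (mem_SD_two hM (by omega)).1 hs
  obtain ⟨tx, ux, ty, uy, tz, uz, hx, hy, hz, gt, gu⟩ := g.exists_add (by omega) (by omega)
  rw [Nat.cast_succ, add_sub_cancel_right] at gu
  have t1 := gt.double_le (by omega) le_rfl
  have u1 := gu.double_le (by omega) le_rfl
  have t2 := monotone_psum tz (Nat.le_succ M)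
  have u2 := monotone_psum uz (Nat.le_succ M)
  rw [psum_succ _ (M + 1), hx, hy, psum_add, psum_add, ← hx] at hD
  simp only [Nat.succ_eq_add_one] at t2 u2
  obtain ⟨tv, uv, hv, hvt, hvu⟩ := exists_add_of_le (k := row 2 1 s (M + 1))
    (a := 2 - (psum tx (M + 1) + psum ty (M + 1)))
    (b := 2 * m - (psum ux (M + 1) + psum uy (M + 1))) (by omega) (by omega) (by omega)
  set t : ℕ → ℕ → ℕ := fun p c => if p = 1 then if c = M + 1 then tv else tx c else ty c with ht
  set u : ℕ → ℕ → ℕ := fun p c => if p = 1 then if c = M + 1 then uv else ux c else uy c with hu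
  have hsum : ∀ p c, inR n 2 (p, 2 + c) → row 2 p s c = t p c + u p c := by
    rintro p c ⟨h1, h2, h3, h4⟩
    simp only at h1 h2 h3 h4
    simp only [ht, hu]
    split_ifs with h5 h6
    · rw [h5, h6, hv]
    · rw [h5, hx]; rfl
    · rw [show p = 2 by omega, hy]; rfl
  obtain ⟨T, U, hTU, T0, U0, hT, hU⟩ := exists_split_of_rows h0 hsum
  have hR (p c : ℕ) (h1 : 1 ≤ p) (h3 : p ≤ 2) (h : p + c ≤ M + 2) : inR n 2 (p, 2 + c) := by
    simp only [inR]
    omega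
  have hz' (c : ℕ) : 0 = tz c + uz c := congrFun hz c
  refine ⟨T, mem_SD_two_of_rows hM (by omega) T0 ?_ ?_ ?_ ?_ gt (v := tv) (by omega),
    U, mem_SD_two_of_rows hM (by omega) U0 ?_ ?_ ?_ ?_ gu (v := uv) (by omega), hTU⟩
  case refine_3 | refine_7 => exact fun c _ => by have := hz' c; omega
  all_goals
    try intro c hc
    first | rw [hT _ _ (hR _ _ (by omega) (by omega) (by omega))]
          | rw [hU _ _ (hR _ _ (by omega) (by omega) (by omega))]
    grind

theorem mem_SD_one {n M m : ℕ} {s : ℕ × ℕ → ℕ} (hn : 2 * n = M + 2) (hM : 2 ≤ M) :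
    s ∈ SD n 1 m ↔ (∀ β, ¬ inR n 1 β → s β = 0) ∧
      Single M (psum (row 1 1 s)) (psum 0) (psum 0) m := by
  constructor
  · rintro ⟨h0, h1, -⟩
    refine ⟨h0, fun a b hab hb => ?_, fun a b ha hab hb => ?_⟩
    · obtain ⟨N, rfl⟩ : ∃ N, M = N + 1 := ⟨M - 1, by omega⟩
      have := h1 (seg 1 1 N) (isType1_iff.2 ⟨?_, Or.inl (isPath_one_row.2 ⟨N, by omega, rfl⟩)⟩)
      · have k := sum_map_seg 1 1 0 N s
        simp only [zero_add, add_zero, psum_zero_right] at k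
        have := monotone_psum (row 1 1 s) (show a + 1 ≤ N + 1 by omega)
        simp only [psum_zero_left]
        omega
      · simp only [mem_seg, inR]
        omega
    · obtain ⟨N, rfl⟩ : ∃ N, M = 1 + N := ⟨M - 1, by omega⟩
      have := h1 (seg 1 2 N) (isType1_iff.2 ⟨?_, Or.inr (isPath_one_row.2 ⟨N, by omega, rfl⟩)⟩)
      · have k := sum_map_seg 1 1 1 N s
        simp only [Nat.reduceAdd] at k
        have := monotone_psum (row 1 1 s) (show a + 1 ≤ 1 + N + 1 by omega)
        simp only [psum_zero_left]
        omega
      · simp only [mem_seg, inR]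
        omega
  · rintro ⟨h0, g⟩
    refine ⟨h0, fun L hL => ?_, fun L₁ L₂ hL => ?_⟩
    · obtain ⟨-, h | h⟩ := isType1_iff.1 hL
      · obtain ⟨a, h, rfl⟩ := isPath_one_row.1 h
        have k := sum_map_seg 1 1 0 a s
        have := g.pathA a a le_rfl (by omega)
        simp only [zero_add, add_zero, psum_zero_right, psum_zero_left] at k this
        omega
      · obtain ⟨a, h, rfl⟩ := isPath_one_row.1 h
        have k := sum_map_seg 1 1 1 a s
        have := g.pathB (1 + a) (1 + a) (by omega) le_rfl (by omega)
        simp only [psum_zero_left] at this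
        simp only [Nat.reduceAdd] at *
        omega
    · obtain ⟨j, hj1, hj2, -⟩ := isType2_iff.1 hL
      omega

theorem exists_split_one {n m : ℕ} {s : ℕ × ℕ → ℕ} (hn : 2 ≤ n) (hs : s ∈ SD n 1 (m + 1)) :
    ∃ t ∈ SD n 1 1, ∃ u ∈ SD n 1 m, s = t + u := by
  obtain ⟨M, hM⟩ : ∃ M, 2 * n = M + 2 := ⟨2 * n - 2, by omega⟩
  obtain ⟨h0, g⟩ := (mem_SD_one hM (by omega)).1 hs
  obtain ⟨tx, ux, ty, uy, tz, uz, hx, hy, hz, gt, gu⟩ := g.exists_add (by omega) (by omega)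
  rw [Nat.cast_succ, add_sub_cancel_right] at gu
  obtain ⟨T, U, hTU, T0, U0, hT, hU⟩ := exists_split_of_rows (t := fun _ => tx)
    (u := fun _ => ux) h0 fun p c hc => by
      rw [show p = 1 from le_antisymm hc.2.1 hc.1, hx]; rfl
  have hR (c : ℕ) (h : c ≤ M) : inR n 1 (1, 1 + c) := by
    simp only [inR]
    omega
  have hy' (c : ℕ) : 0 = ty c + uy c := congrFun hy c
  have hz' (c : ℕ) : 0 = tz c + uz c := congrFun hz c
  refine ⟨T, (mem_SD_one hM (by omega)).2 ⟨T0, gt.congr (fun c hc => hT _ _ (hR c hc)) ?_ ?_⟩,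
    U, (mem_SD_one hM (by omega)).2 ⟨U0, gu.congr (fun c hc => hU _ _ (hR c hc)) ?_ ?_⟩, hTU⟩
  all_goals
    intro c _
    have := hy' c
    have := hz' c
    simp only [Pi.zero_apply]
    omega

theorem not_isType1_self {n : ℕ} (hn : 1 ≤ n) (L : List (ℕ × ℕ)) : ¬ IsType1 n n L := by
  intro hL
  obtain ⟨-, h | h⟩ := isType1_iff.1 hL <;> · have := h.le; omega

theorem cB_self (n : ℕ) : cB n n = 1 := by
  simp [cB]

theorem mem_SD_two_two {m : ℕ} {s : ℕ × ℕ → ℕ} : s ∈ SD 2 2 m ↔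
    (∀ β, ¬ inR 2 2 β → s β = 0) ∧ s (1, 2) + s (1, 3) + s (2, 2) ≤ m := by
  constructor
  · rintro ⟨h0, -, h2⟩
    refine ⟨h0, ?_⟩
    have := h2 (seg 1 2 1) (seg 2 2 0) (isType2_iff.2 ⟨1, by omega, by omega, isPath_seg _ _ _,
      isPath_seg _ _ _, ?_, ?_, ?_⟩)
    · simp only [seg, cB_self, List.map_append, List.map_cons, List.map_nil, List.sum_append,
        List.sum_cons, List.sum_nil, Nat.reduceAdd] at this
      omega
    all_goals
      simp only [mem_seg, inR]
      omega
  · rintro ⟨h0, h⟩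
    refine ⟨h0, fun L hL => absurd hL (not_isType1_self (by omega) L), fun L₁ L₂ hL => ?_⟩
    obtain ⟨j, hj1, hj2, p1, p2, -, -, -⟩ := isType2_iff.1 hL
    obtain rfl : j = 1 := by omega
    obtain ⟨a, ha, rfl⟩ := isPath_one_row.1 p1
    obtain ⟨b, hb, rfl⟩ := isPath_one_row.1 p2
    obtain rfl : a = 1 := by omega
    obtain rfl : b = 0 := by omega
    simp only [seg, cB_self, List.map_append, List.map_cons, List.map_nil, List.sum_append,
      List.sum_cons, List.sum_nil, Nat.reduceAdd]
    omega

theorem mem_SD_three_three {m : ℕ} {s : ℕ × ℕ → ℕ} : s ∈ SD 3 3 m ↔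
    (∀ β, ¬ inR 3 3 β → s β = 0) ∧
      s (1, 3) + s (1, 4) + s (1, 5) + s (2, 3) + s (2, 4) ≤ m ∧
      s (1, 3) + s (1, 4) + s (2, 4) + s (2, 3) + s (3, 3) ≤ m := by
  constructor
  · rintro ⟨h0, -, h2⟩
    have e1 := h2 (seg 1 3 2) (seg 2 3 1)
    have e2 := h2 (seg 1 3 1 ++ seg 2 4 0) (seg 2 3 0 ++ seg 3 3 0)
    simp only [isType2_iff] at e1 e2
    specialize e1 ⟨1, by omega, by omega, isPath_seg _ _ _, isPath_seg _ _ _, ?_, ?_, ?_⟩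
    iterate 3
      simp only [mem_seg, inR]
      omega
    specialize e2 ⟨2, by omega, by omega, (isPath_seg _ _ _).seg_append,
      (isPath_seg _ _ _).seg_append, ?_, ?_, ?_⟩
    iterate 3
      simp only [List.mem_append, mem_seg, inR]
      omega
    simp only [seg, cB_self, List.map_append, List.map_cons, List.map_nil, List.sum_append,
      List.sum_cons, List.sum_nil, Nat.reduceAdd] at e1 e2
    exact ⟨h0, by omega, by omega⟩
  · rintro ⟨h0, h1, h2⟩
    refine ⟨h0, fun L hL => absurd hL (not_isType1_self (by omega) L), fun L₁ L₂ hL => ?_⟩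
    obtain ⟨j, hj1, hj2, p1, p2, -, -, hd⟩ := isType2_iff.1 hL
    obtain rfl | rfl : j = 1 ∨ j = 2 := by omega
    · obtain ⟨a, ha, rfl⟩ := isPath_one_row.1 p1
      obtain ⟨b, hb, rfl⟩ := isPath_one_row.1 p2
      obtain rfl : a = 2 := by omega
      obtain rfl : b = 1 := by omega
      simp only [seg, cB_self, List.map_append, List.map_cons, List.map_nil, List.sum_append,
        List.sum_cons, List.sum_nil, Nat.reduceAdd]
      omega
    · obtain ⟨a, l, ha, rfl⟩ := isPath_two_rows.1 p1
      obtain ⟨b, r, hb, rfl⟩ := isPath_two_rows.1 p2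
      have hab : a ≠ 0 := by
        rintro rfl
        refine hd (2, 3) ?_ ?_ <;> simp [mem_seg]
      obtain ⟨rfl, rfl⟩ : a = 1 ∧ l = 0 := by omega
      obtain ⟨rfl, rfl⟩ : b = 0 ∧ r = 0 := by omega
      simp only [seg, cB_self, List.map_append, List.map_cons, List.map_nil, List.sum_append,
        List.sum_cons, List.sum_nil, Nat.reduceAdd]
      omega

theorem mem_SD_four_four {m : ℕ} {s : ℕ × ℕ → ℕ} : s ∈ SD 4 4 m ↔
    (∀ β, ¬ inR 4 4 β → s β = 0) ∧
      s (1, 4) + s (1, 5) + s (2, 4) + s (1, 6) + s (2, 5) + s (2, 6) + s (1, 7) ≤ m ∧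
      s (1, 4) + s (1, 5) + s (2, 4) + s (2, 6) + s (3, 5) + s (2, 5) + s (3, 4) ≤ m ∧
      s (1, 4) + s (1, 5) + s (2, 4) + s (2, 6) + s (3, 5) + s (1, 6) + s (3, 4) ≤ m ∧
      s (1, 4) + s (1, 5) + s (2, 4) + s (2, 6) + s (3, 5) + s (1, 6) + s (2, 5) ≤ m ∧
      s (1, 4) + s (1, 5) + s (2, 4) + s (2, 5) + s (3, 5) + s (3, 4) + s (4, 4) ≤ m := by
  constructor
  · rintro ⟨h0, -, h2⟩
    have e1 := h2 (seg 1 4 3) (seg 2 4 2)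
    have e2 := h2 (seg 1 4 1 ++ seg 2 5 1) (seg 2 4 0 ++ seg 3 4 1)
    have e3 := h2 (seg 1 4 2 ++ seg 2 6 0) (seg 2 4 0 ++ seg 3 4 1)
    have e4 := h2 (seg 1 4 2 ++ seg 2 6 0) (seg 2 4 1 ++ seg 3 5 0)
    have e5 := h2 (seg 1 4 1 ++ (seg 2 5 0 ++ seg 3 5 0)) (seg 2 4 0 ++ (seg 3 4 0 ++ seg 4 4 0))
    simp only [isType2_iff] at e1 e2 e3 e4 e5
    specialize e1 ⟨1, by omega, by omega, isPath_seg _ _ _, isPath_seg _ _ _, ?_, ?_, ?_⟩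
    iterate 3
      simp only [mem_seg, inR]
      omega
    specialize e2 ⟨2, by omega, by omega, (isPath_seg _ _ _).seg_append,
      (isPath_seg _ _ _).seg_append, ?_, ?_, ?_⟩
    iterate 3
      simp only [List.mem_append, mem_seg, inR]
      omega
    specialize e3 ⟨2, by omega, by omega, (isPath_seg _ _ _).seg_append,
      (isPath_seg _ _ _).seg_append, ?_, ?_, ?_⟩
    iterate 3
      simp only [List.mem_append, mem_seg, inR]
      omega
    specialize e4 ⟨2, by omega, by omega, (isPath_seg _ _ _).seg_append,
      (isPath_seg _ _ _).seg_append, ?_, ?_, ?_⟩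
    iterate 3
      simp only [List.mem_append, mem_seg, inR]
      omega
    specialize e5 ⟨3, by omega, by omega, (isPath_seg _ _ _).seg_append.seg_append,
      (isPath_seg _ _ _).seg_append.seg_append, ?_, ?_, ?_⟩
    iterate 3
      simp only [List.mem_append, mem_seg, inR]
      omega
    simp only [seg, cB_self, List.map_append, List.map_cons, List.map_nil, List.sum_append,
      List.sum_cons, List.sum_nil, Nat.reduceAdd] at e1 e2 e3 e4 e5
    exact ⟨h0, by omega, by omega, by omega, by omega, by omega⟩
  · rintro ⟨h0, h1, h2, h3, h4, h5⟩
    refine ⟨h0, fun L hL => absurd hL (not_isType1_self (by omega) L), fun L₁ L₂ hL => ?_⟩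
    obtain ⟨j, hj1, hj2, p1, p2, -, -, hd⟩ := isType2_iff.1 hL
    obtain rfl | rfl | rfl : j = 1 ∨ j = 2 ∨ j = 3 := by omega
    · obtain ⟨a, ha, rfl⟩ := isPath_one_row.1 p1
      obtain ⟨b, hb, rfl⟩ := isPath_one_row.1 p2
      obtain rfl : a = 3 := by omega
      obtain rfl : b = 2 := by omega
      simp only [seg, cB_self, List.map_append, List.map_cons, List.map_nil, List.sum_append,
        List.sum_cons, List.sum_nil, Nat.reduceAdd]
      omega
    · obtain ⟨a, l, ha, rfl⟩ := isPath_two_rows.1 p1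
      obtain ⟨b, r, hb, rfl⟩ := isPath_two_rows.1 p2
      have hab : b < a := by
        by_contra hba
        refine hd (2, 4 + a) ?_ ?_ <;> simp only [List.mem_append, mem_seg, true_and] <;> omega
      obtain ⟨rfl, rfl, rfl, rfl⟩ | ⟨rfl, rfl, rfl, rfl⟩ | ⟨rfl, rfl, rfl, rfl⟩ :
          (a = 1 ∧ l = 1 ∧ b = 0 ∧ r = 1) ∨ (a = 2 ∧ l = 0 ∧ b = 0 ∧ r = 1) ∨
            (a = 2 ∧ l = 0 ∧ b = 1 ∧ r = 0) := by omega
      all_goals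
        simp only [seg, cB_self, List.map_append, List.map_cons, List.map_nil, List.sum_append,
          List.sum_cons, List.sum_nil, Nat.reduceAdd]
        omega
    · obtain ⟨a, l, k, ha, rfl⟩ := isPath_three_rows.1 p1
      obtain ⟨b, r, k', hb, rfl⟩ := isPath_three_rows.1 p2
      have hab : a ≠ 0 := by
        rintro rfl
        refine hd (2, 4) ?_ ?_ <;> simp [mem_seg]
      obtain ⟨rfl, rfl, rfl⟩ : a = 1 ∧ l = 0 ∧ k = 0 := by omega
      obtain ⟨rfl, rfl, rfl⟩ : b = 0 ∧ r = 0 ∧ k' = 0 := by omega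
      simp only [seg, cB_self, List.map_append, List.map_cons, List.map_nil, List.sum_append,
        List.sum_cons, List.sum_nil, Nat.reduceAdd]
      omega

theorem exists_le_add_eq {r a b : ℕ} (h : r ≤ a + b) : ∃ a' ≤ a, ∃ b' ≤ b, a' + b' = r :=
  ⟨min r a, by omega, r - min r a, by omega, by omega⟩

theorem exists_split_one_one {m : ℕ} {s : ℕ × ℕ → ℕ} (hs : s ∈ SD 1 1 (m + 1)) :
    ∃ t ∈ SD 1 1 1, ∃ u ∈ SD 1 1 m, s = t + u := by
  have h (N : ℕ) (f : ℕ × ℕ → ℕ) (hf : ∀ β, ¬ inR 1 1 β → f β = 0) : f ∈ SD 1 1 N := by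
    refine ⟨hf, fun L hL => absurd hL (not_isType1_self le_rfl L), fun L₁ L₂ hL => ?_⟩
    obtain ⟨j, hj1, hj2, -⟩ := isType2_iff.1 hL
    omega
  exact ⟨0, h _ _ fun _ _ => rfl, s, h _ _ hs.1, (zero_add s).symm⟩

/-- Splitting `s` along a function below it that lies in the support of `s`. -/
theorem exists_split_of_le {n i j m : ℕ} {s t : ℕ × ℕ → ℕ} (hs : ∀ β, ¬ inR n i β → s β = 0)
    (h : t ≤ s) (ht : (∀ β, ¬ inR n i β → t β = 0) → t ∈ SD n i j)
    (hu : (∀ β, ¬ inR n i β → (s - t) β = 0) → s - t ∈ SD n i m) :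
    ∃ t ∈ SD n i j, ∃ u ∈ SD n i m, s = t + u := by
  refine ⟨t, ht fun β hβ => ?_, s - t, hu fun β hβ => ?_, (add_tsub_cancel_of_le h).symm⟩
  · exact Nat.eq_zero_of_le_zero ((h β).trans_eq (hs β hβ))
  · simp [hs β hβ]

theorem ite_eq_le {s t : ℕ × ℕ → ℕ} {γ : ℕ × ℕ} {a : ℕ} (ha : a ≤ s γ) (ht : t ≤ s) :
    (fun β => if β = γ then a else t β) ≤ s := by
  intro β
  dsimp only
  split_ifs with h
  · rwa [h]
  · exact ht β

theorem exists_split_two_two {m : ℕ} {s : ℕ × ℕ → ℕ} (hs : s ∈ SD 2 2 (m + 1)) :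
    ∃ t ∈ SD 2 2 1, ∃ u ∈ SD 2 2 m, s = t + u := by
  obtain ⟨h0, h⟩ := mem_SD_two_two.1 hs
  obtain ⟨a, ha, b, hb, e⟩ := exists_le_add_eq
    (show min 1 (s (1, 2) + s (1, 3) + s (2, 2)) ≤ s (1, 2) + (s (1, 3) + s (2, 2)) by omega)
  obtain ⟨c, hc, d, hd, e'⟩ := exists_le_add_eq hb
  refine exists_split_of_le
    (t := fun x => if x = (1, 2) then a else if x = (1, 3) then c else if x = (2, 2) then d else 0)
    h0 ?_ (fun k => mem_SD_two_two.2 ⟨k, ?_⟩) fun k => mem_SD_two_two.2 ⟨k, ?_⟩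
  · exact ite_eq_le ha <| ite_eq_le hc <| ite_eq_le hd fun _ => Nat.zero_le _
  · simp
    omega
  · simp
    omega

theorem exists_split_three_three {m : ℕ} {s : ℕ × ℕ → ℕ} (hs : s ∈ SD 3 3 (m + 2)) :
    ∃ t ∈ SD 3 3 2, ∃ u ∈ SD 3 3 m, s = t + u := by
  obtain ⟨h0, h1, h2⟩ := mem_SD_three_three.1 hs
  obtain ⟨r, hr⟩ : ∃ r, r = min 2 ((s (1, 3) + s (1, 4)) + (s (2, 3) + s (2, 4))) := ⟨_, rfl⟩
  obtain ⟨p, hp, q, hq, e⟩ := exists_le_add_eq (hr.trans_le (min_le_right _ _))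
  obtain ⟨a, ha, b, hb, ep⟩ := exists_le_add_eq hp
  obtain ⟨c, hc, d, hd, eq⟩ := exists_le_add_eq hq
  refine exists_split_of_le
    (t := fun x => if x = (1, 3) then a else if x = (1, 4) then b else if x = (2, 3) then c
      else if x = (2, 4) then d else if x = (1, 5) then min (2 - r) (s (1, 5))
      else if x = (3, 3) then min (2 - r) (s (3, 3)) else 0)
    h0 ?_ (fun k => mem_SD_three_three.2 ⟨k, ?_, ?_⟩) fun k => mem_SD_three_three.2 ⟨k, ?_, ?_⟩
  · exact ite_eq_le ha <| ite_eq_le hb <| ite_eq_le hc <| ite_eq_le hd <|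
      ite_eq_le (min_le_right _ _) <| ite_eq_le (min_le_right _ _) fun _ => Nat.zero_le _
  all_goals
    simp
    omega

theorem exists_pairwise_split {m q x y z : ℕ} (hm : Even m) (hxy : q + x + y ≤ m + 2)
    (hxz : q + x + z ≤ m + 2) (hyz : q + y + z ≤ m + 2) :
    ∃ q' ≤ q, ∃ x' ≤ x, ∃ y' ≤ y, ∃ z' ≤ z,
      (q' + x' + y' ≤ 2 ∧ q' + x' + z' ≤ 2 ∧ q' + y' + z' ≤ 2) ∧
      q + x + y ≤ m + (q' + x' + y') ∧ q + x + z ≤ m + (q' + x' + z') ∧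
      q + y + z ≤ m + (q' + y' + z') := by
  obtain ⟨k, rfl⟩ := hm
  rcases Nat.lt_or_ge 1 q with hq | hq
  · exact ⟨2, by omega, 0, by omega, 0, by omega, 0, by omega, by omega, by omega⟩
  obtain rfl | rfl : q = 0 ∨ q = 1 := by omega
  · rcases Nat.eq_zero_or_pos x with rfl | hx
    · exact ⟨0, by omega, 0, by omega, min 2 y, by omega, min z (2 - min 2 y), by omega, by omega,
        by omega⟩
    rcases Nat.eq_zero_or_pos y with rfl | hy
    · exact ⟨0, by omega, min 2 x, by omega, 0, by omega, min z (2 - min 2 x), by omega, by omega,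
        by omega⟩
    rcases Nat.eq_zero_or_pos z with rfl | hz
    · exact ⟨0, by omega, min 2 x, by omega, min y (2 - min 2 x), by omega, 0, by omega, by omega,
        by omega⟩
    · exact ⟨0, by omega, 1, hx, 1, hy, 1, hz, by omega, by omega⟩
  · by_cases hx : 1 ≤ x ∧ y + z < k + k + 1
    · exact ⟨1, le_rfl, 1, hx.1, 0, by omega, 0, by omega, by omega, by omega⟩
    by_cases hy : 1 ≤ y ∧ x + z < k + k + 1
    · exact ⟨1, le_rfl, 0, by omega, 1, hy.1, 0, by omega, by omega, by omega⟩
    · exact ⟨1, le_rfl, 0, by omega, 0, by omega, min 1 z, by omega, by omega, by omega⟩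

theorem exists_split_four_four {m : ℕ} {s : ℕ × ℕ → ℕ} (hm : Even m)
    (hs : s ∈ SD 4 4 (m + 2)) : ∃ t ∈ SD 4 4 2, ∃ u ∈ SD 4 4 m, s = t + u := by
  obtain ⟨h0, h1, h2, h3, h4, h5⟩ := mem_SD_four_four.1 hs
  obtain ⟨q, hq, x, hx, y, hy, z, hz, ht, hu⟩ := exists_pairwise_split hm
    (q := s (1, 4) + (s (1, 5) + (s (2, 4) + (s (2, 6) + s (3, 5))))) (x := s (1, 6))
    (y := s (2, 5)) (z := s (3, 4)) (by omega) (by omega) (by omega)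
  obtain ⟨a, ha, q₁, hq₁, e₁⟩ := exists_le_add_eq hq
  obtain ⟨b, hb, q₂, hq₂, e₂⟩ := exists_le_add_eq hq₁
  obtain ⟨c, hc, q₃, hq₃, e₃⟩ := exists_le_add_eq hq₂
  obtain ⟨d, hd, e, he, e₄⟩ := exists_le_add_eq hq₃
  obtain ⟨f, hf, f₁, f₂⟩ : ∃ f ≤ s (1, 7), a + b + c + x + y + d + f ≤ 2 ∧
      s (1, 4) + s (1, 5) + s (2, 4) + s (1, 6) + s (2, 5) + s (2, 6) + s (1, 7) ≤
        m + (a + b + c + x + y + d + f) :=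
    ⟨min (2 - (a + b + c + x + y + d)) (s (1, 7)), by omega, by omega, by omega⟩
  obtain ⟨g, hg, g₁, g₂⟩ : ∃ g ≤ s (4, 4), a + b + c + y + e + z + g ≤ 2 ∧
      s (1, 4) + s (1, 5) + s (2, 4) + s (2, 5) + s (3, 5) + s (3, 4) + s (4, 4) ≤
        m + (a + b + c + y + e + z + g) :=
    ⟨min (2 - (a + b + c + y + e + z)) (s (4, 4)), by omega, by omega, by omega⟩
  obtain ⟨t, t14, t15, t24, t26, t35, t16, t25, t34, t17, t44, hts⟩ : ∃ t : ℕ × ℕ → ℕ,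
      t (1, 4) = a ∧ t (1, 5) = b ∧ t (2, 4) = c ∧ t (2, 6) = d ∧ t (3, 5) = e ∧ t (1, 6) = x ∧
      t (2, 5) = y ∧ t (3, 4) = z ∧ t (1, 7) = f ∧ t (4, 4) = g ∧ t ≤ s := by
    refine ⟨fun β => if β = (1, 4) then a else if β = (1, 5) then b else if β = (2, 4) then c
      else if β = (2, 6) then d else if β = (3, 5) then e else if β = (1, 6) then x
      else if β = (2, 5) then y else if β = (3, 4) then z else if β = (1, 7) then f
      else if β = (4, 4) then g else 0, rfl, rfl, rfl, rfl, rfl, rfl, rfl, rfl, rfl, rfl,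
      ?_⟩
    exact ite_eq_le ha <| ite_eq_le hb <| ite_eq_le hc <| ite_eq_le hd <| ite_eq_le he <|
      ite_eq_le hx <| ite_eq_le hy <| ite_eq_le hz <| ite_eq_le hf <| ite_eq_le hg
      fun _ => Nat.zero_le _
  refine exists_split_of_le h0 hts (fun k => mem_SD_four_four.2 ⟨k, ?_, ?_, ?_, ?_, ?_⟩)
    fun k => mem_SD_four_four.2 ⟨k, ?_, ?_, ?_, ?_, ?_⟩
  all_goals
    simp only [Pi.sub_apply, t14, t15, t24, t26, t35, t16, t25, t34, t17, t44]
    omega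

theorem sum_map_add_fun (L : List (ℕ × ℕ)) (s t : ℕ × ℕ → ℕ) :
    (L.map (s + t)).sum = (L.map s).sum + (L.map t).sum := by
  induction L with
  | nil => rfl
  | cons x L ih => simp only [List.map_cons, List.sum_cons, ih, Pi.add_apply]; omega

theorem zero_mem_SD (n i m : ℕ) : 0 ∈ SD n i m := by
  have h (L : List (ℕ × ℕ)) : (L.map (0 : ℕ × ℕ → ℕ)).sum = 0 := by
    have := sum_map_add_fun L 0 0
    rw [add_zero] at this
    omega
  exact ⟨fun _ _ => rfl, fun L _ => by simp [h], fun L₁ L₂ _ => by simp [h]⟩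

theorem add_mem_SD {n i a b : ℕ} {s t : ℕ × ℕ → ℕ} (hs : s ∈ SD n i a) (ht : t ∈ SD n i b) :
    s + t ∈ SD n i (a + b) := by
  refine ⟨fun β hβ => by simp [hs.1 β hβ, ht.1 β hβ], fun L hL => ?_, fun L₁ L₂ hL => ?_⟩
  · rw [sum_map_add_fun]
    exact Nat.add_le_add (hs.2.1 L hL) (ht.2.1 L hL)
  · rw [sum_map_add_fun, add_mul]
    exact Nat.add_le_add (hs.2.2 L₁ L₂ hL) (ht.2.2 L₁ L₂ hL)

theorem exists_odd_split_three {n N : ℕ} {s : ℕ × ℕ → ℕ} (hn : 4 ≤ n)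
    (hs : s ∈ SD n 3 (2 * N + 1)) : ∃ t ∈ SD n 3 1, ∃ u ∈ SD n 3 (2 * N), s = t + u := by
  induction N generalizing s with
  | zero => exact ⟨s, hs, 0, zero_mem_SD _ _ _, (add_zero s).symm⟩
  | succ N ih =>
    obtain ⟨j, rfl | rfl, -, t, ht, u, hu, rfl⟩ := exists_split_three hn (by omega) hs
    · exact ⟨t, ht, u, hu, rfl⟩
    · obtain ⟨t', ht', u', hu', rfl⟩ := ih hu
      refine ⟨t', ht', t + u', ?_, add_left_comm t t' u'⟩
      convert add_mem_SD ht hu' using 2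
      omega

theorem exists_even_split_three {n N : ℕ} {s : ℕ × ℕ → ℕ} (hn : 4 ≤ n)
    (hs : s ∈ SD n 3 (2 * N + 2)) : ∃ t ∈ SD n 3 2, ∃ u ∈ SD n 3 (2 * N), s = t + u := by
  obtain ⟨j, rfl | rfl, -, t, ht, u, hu, rfl⟩ := exists_split_three hn (by omega) hs
  · obtain ⟨t', ht', u', hu', rfl⟩ := exists_odd_split_three (N := N) hn hu
    exact ⟨t + t', add_mem_SD ht ht', u', hu', (add_assoc t t' u').symm⟩
  · exact ⟨t, ht, u, hu, rfl⟩

theorem exists_split_eps {n i N : ℕ} {s : ℕ × ℕ → ℕ} (hi1 : 1 ≤ i) (hin : i ≤ n)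
    (hcase : i ≤ 3 ∨ n ≤ 4) (hs : s ∈ SD n i (epsB i * (N + 1))) :
    ∃ t ∈ SD n i (epsB i), ∃ u ∈ SD n i (epsB i * N), s = t + u := by
  obtain rfl | rfl | rfl | ⟨rfl, rfl⟩ : i = 1 ∨ i = 2 ∨ i = 3 ∨ (i = 4 ∧ n = 4) := by omega
  · simp only [epsB, Nat.reduceLeDiff, if_true, one_mul] at hs ⊢
    obtain rfl | hn := hin.eq_or_lt
    · exact exists_split_one_one hs
    · exact exists_split_one hn hs
  · simp only [epsB, le_refl, if_true, one_mul] at hs ⊢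
    obtain rfl | hn := hin.eq_or_lt
    · exact exists_split_two_two hs
    · exact exists_split_two hn hs
  · simp only [epsB, Nat.reduceLeDiff, if_false, mul_add, mul_one] at hs ⊢
    obtain rfl | hn := hin.eq_or_lt
    · exact exists_split_three_three hs
    · exact exists_even_split_three hn hs
  · simp only [epsB, Nat.reduceLeDiff, if_false, mul_add, mul_one] at hs ⊢
    exact exists_split_four_four (even_two_mul N) hs

theorem SD_add {n i : ℕ} (hi1 : 1 ≤ i) (hin : i ≤ n) (hcase : i ≤ 3 ∨ n ≤ 4) (a b : ℕ) :
    SD n i (epsB i * (a + b)) = SD n i (epsB i * a) + SD n i (epsB i * b) := by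
  refine Set.Subset.antisymm ?_ ?_
  · induction a with
    | zero =>
      intro s hs
      exact Set.mem_add.2 ⟨0, zero_mem_SD _ _ _, s, by simpa using hs, zero_add s⟩
    | succ a ih =>
      intro s hs
      rw [show a + 1 + b = a + b + 1 by omega] at hs
      obtain ⟨t, ht, u, hu, rfl⟩ := exists_split_eps hi1 hin hcase hs
      obtain ⟨v, hv, w, hw, rfl⟩ := Set.mem_add.1 (ih hu)
      refine Set.mem_add.2 ⟨t + v, ?_, w, hw, add_assoc t v w⟩
      rw [mul_add, mul_one, add_comm]
      exact add_mem_SD ht hv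
  · rintro s hs
    obtain ⟨t, ht, u, hu, rfl⟩ := Set.mem_add.1 hs
    rw [mul_add]
    exact add_mem_SD ht hu

/-- for `1 ≤ i ≤ n` with `i ≤ 3` or `n ≤ 4`, `S(D, k·ε_i·m·ω_i)` is the
`k`-fold Minkowski sum of `S(D, ε_i·m·ω_i)` with itself; i.e. the polytope
`P(D, ε_i·m·ω_i)` is a normal lattice polytope. -/
theorem SD_normal (n i : ℕ) (hi1 : 1 ≤ i) (hin : i ≤ n) (hcase : i ≤ 3 ∨ n ≤ 4)
    (m k : ℕ) (hk : 1 ≤ k) :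
    SD n i (k * (epsB i * m)) = ∑ _j ∈ Finset.range k, SD n i (epsB i * m) := by
  induction k, hk using Nat.le_induction with
  | base => simp
  | succ k _ ih =>
    rw [Finset.sum_range_succ, ← ih, Nat.mul_left_comm, Nat.mul_left_comm k, Nat.succ_mul]
    exact SD_add hi1 hin hcase (k * m) m
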